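/- Let n ≥ 5. There exists a constant C = C(n) such that for every integer λ ≥ 1, all functions f₁,…,f_n : ℤ → ℂ, and every y ∈ ℤ, |A_λ[f₁,…,f_n](y)| ≤ C (N_λ^{n−2} / r_n(λ)) ∏_{i=1}^n ( N_λ^{−1} Σ_{x ∈ [−N_λ, N_λ] ∩ ℤ} |f_i(y − x)|² )^{1/2}, where N_λ is the nearest integer to 2λ^{1/2}. -/

import Mathlib

open scoped BigOperators ENNReal NNReal
open MeasureTheory Finset

noncomputable section

/-- `sphereCount n lam` is the number of lattice points `x ∈ ℤ^n` with
`x₁² + ⋯ + x_n² = lam`. -/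
def sphereCount (n lam : ℕ) : ℕ :=
  {x : Fin n → ℤ | ∑ i, (x i) ^ 2 = (lam : ℤ)}.ncard

/-- The multilinear spherical average
`A_lam[f₁,…,f_n](y) = (1/r_n(lam)) ∑_{|x|² = lam} f₁(y-x₁)⋯f_n(y-x_n)`. -/
def mulAvg (n lam : ℕ) (f : Fin n → ℤ → ℂ) (y : ℤ) : ℂ :=
  (sphereCount n lam : ℂ)⁻¹ *
    ∑ᶠ x ∈ {x : Fin n → ℤ | ∑ i, (x i) ^ 2 = (lam : ℤ)}, ∏ i, f i (y - x i)

/-- The maximal function `A_*[f₁,…,f_n](y) = sup_{lam ≥ 1} |A_lam[f₁,…,f_n](y)|`. -/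
def maxFn (n : ℕ) (f : Fin n → ℤ → ℂ) (y : ℤ) : ℝ≥0∞ :=
  ⨆ (lam : ℕ) (_ : 1 ≤ lam), (‖mulAvg n lam f y‖₊ : ℝ≥0∞)

/-- The `ℓ^p(ℤ)` norm of a complex-valued function, valued in `ℝ≥0∞`. -/
def lpNorm (p : ℝ) (g : ℤ → ℂ) : ℝ≥0∞ :=
  (∑' x : ℤ, (‖g x‖₊ : ℝ≥0∞) ^ p) ^ (1 / p)

/-- The `ℓ^q(ℤ)` norm of an `ℝ≥0∞`-valued function. -/
def lqNormE (q : ℝ) (g : ℤ → ℝ≥0∞) : ℝ≥0∞ :=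
  (∑' x : ℤ, g x ^ q) ^ (1 / q)

/-- The additive character `x ↦ exp(2πix)`. -/
def ee (x : ℝ) : ℂ := Complex.exp ((2 * Real.pi * x : ℝ) * Complex.I)

lemma ee_add (x y : ℝ) : ee (x + y) = ee x * ee y := by
  unfold ee
  rw [← Complex.exp_add]
  congr 1
  push_cast
  ring

lemma ee_zero : ee 0 = 1 := by simp [ee]

lemma ee_norm (x : ℝ) : ‖ee x‖ = 1 := by
  unfold ee
  exact Complex.norm_exp_ofReal_mul_I _

lemma ee_int (k : ℤ) : ee k = 1 := by
  unfold ee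
  rw [Complex.exp_eq_one_iff]
  exact ⟨k, by push_cast; ring⟩

lemma ee_conj (x : ℝ) : (starRingEnd ℂ) (ee x) = ee (-x) := by
  unfold ee
  rw [← Complex.exp_conj]
  congr 1
  rw [map_mul, Complex.conj_ofReal, Complex.conj_I]
  push_cast
  ring

lemma ee_ne_zero (x : ℝ) : ee x ≠ 0 := by
  intro h
  have := ee_norm x
  rw [h] at this
  simp at this

lemma ee_nat_mul (n : ℕ) (x : ℝ) : ee (n * x) = ee x ^ n := by
  induction n with
  | zero => simp [ee_zero]
  | succ n ih => rw [pow_succ, ← ih, ← ee_add]; congr 1; push_cast; ring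

lemma ee_sub_int (x : ℝ) (k : ℤ) : ee (x - k) = ee x := by
  have h : x = (x - k) + k := by ring
  conv_rhs => rw [h, ee_add, ee_int, mul_one]

lemma ee_eq_one {x : ℝ} (h : ee x = 1) : ∃ k : ℤ, x = k := by
  unfold ee at h
  rw [Complex.exp_eq_one_iff] at h
  obtain ⟨k, hk⟩ := h
  refine ⟨k, ?_⟩
  have h2 : ((2 * Real.pi * x : ℝ) : ℂ) = ((k * (2 * Real.pi) : ℝ) : ℂ) := by
    apply mul_right_cancel₀ Complex.I_ne_zero
    rw [hk]; push_cast; ring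
  have h3 := Complex.ofReal_injective h2
  have := Real.pi_pos
  field_simp at h3
  linarith

/-- lower bound for `|e(x) - 1|` -/
lemma ee_sub_one_ge (x : ℝ) : |x - round x| ≤ ‖ee x - 1‖ := by
  rw [← ee_sub_int x (round x)]
  set t := x - round x with ht
  have h1 : |t| ≤ 1 / 2 := abs_sub_round x
  have : ee t - 1 = Complex.exp (Complex.I * ((2 * Real.pi * t : ℝ) : ℂ)) - 1 := by
    unfold ee; rw [mul_comm]
  rw [this, Complex.norm_exp_I_mul_ofReal_sub_one]
  have h2 := Real.mul_abs_le_abs_sin (x := Real.pi * t) (by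
    rw [abs_mul, abs_of_pos Real.pi_pos]; nlinarith [Real.pi_pos])
  rw [abs_mul, abs_of_pos Real.pi_pos] at h2
  have h3 : 2 / Real.pi * (Real.pi * |t|) = 2 * |t| := by
    field_simp
  rw [norm_mul, Real.norm_eq_abs, Real.norm_eq_abs, show 2 * Real.pi * t / 2 = Real.pi * t by ring]
  rw [h3] at h2
  have := abs_nonneg t
  rw [show |(2:ℝ)| = 2 by norm_num]
  linarith

/-- orthogonality -/
lemma ee_sum (M : ℕ) (hM : 0 < M) (k : ℤ) :
    ∑ j ∈ range M, ee (k * ((j : ℝ) / M)) = if (M : ℤ) ∣ k then (M : ℂ) else 0 := by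
  have hM' : (M : ℝ) ≠ 0 := by positivity
  have h1 : ∀ j : ℕ, ee (k * ((j : ℝ) / M)) = ee ((k : ℝ) / M) ^ j := by
    intro j; rw [← ee_nat_mul]; congr 1; ring
  simp_rw [h1]
  split_ifs with h
  · obtain ⟨m, rfl⟩ := h
    have : ((( (M : ℤ) * m : ℤ) : ℝ) / M) = m := by push_cast; field_simp
    rw [this, ee_int]; simp
  · have hne : ee ((k : ℝ) / M) ≠ 1 := by
      intro h2
      obtain ⟨m, hm⟩ := ee_eq_one h2
      apply h
      refine ⟨m, ?_⟩
      field_simp at hm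
      exact_mod_cast hm
    rw [geom_sum_eq hne, ← ee_nat_mul]
    have : (M : ℝ) * ((k : ℝ) / M) = k := by field_simp
    rw [this, ee_int]; simp

/-- Parseval for frequencies distinct modulo `M`. -/
lemma parseval {ι : Type*} (M : ℕ) (hM : 0 < M) (A : Finset ι) (φ : ι → ℤ) (c : ι → ℂ)
    (hinj : ∀ a ∈ A, ∀ b ∈ A, (M : ℤ) ∣ φ a - φ b → a = b) :
    ∑ j ∈ range M, ‖∑ a ∈ A, c a * ee (φ a * ((j : ℝ) / M))‖ ^ 2 = M * ∑ a ∈ A, ‖c a‖ ^ 2 := by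
  classical
  have h0 : ∀ z : ℂ, ((‖z‖ ^ 2 : ℝ) : ℂ) = z * (starRingEnd ℂ) z := by
    intro z; rw [Complex.mul_conj, Complex.normSq_eq_norm_sq]
  apply Complex.ofReal_injective
  rw [Complex.ofReal_sum]
  simp_rw [h0, map_sum, sum_mul_sum]
  rw [sum_comm]
  push_cast
  rw [mul_sum]
  refine sum_congr rfl fun a ha => ?_
  rw [sum_comm]
  have h1 : ∀ b ∈ A, ∑ j ∈ range M, c a * ee (φ a * ((j : ℝ) / M)) *
      (starRingEnd ℂ) (c b * ee (φ b * ((j : ℝ) / M))) =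
      if a = b then (M : ℂ) * (c a * (starRingEnd ℂ) (c a)) else 0 := by
    intro b hb
    have h2 : ∀ j : ℕ, c a * ee (φ a * ((j : ℝ) / M)) *
      (starRingEnd ℂ) (c b * ee (φ b * ((j : ℝ) / M))) = (c a * (starRingEnd ℂ) (c b)) *
        ee (((φ a - φ b : ℤ) : ℝ) * ((j : ℝ) / M)) := by
      intro j
      rw [map_mul, ee_conj]
      have : (((φ a - φ b : ℤ) : ℝ) * ((j : ℝ) / M)) = φ a * ((j : ℝ) / M) + -(φ b * ((j : ℝ) / M)) := by
        push_cast; ring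
      rw [this, ee_add]; ring
    simp_rw [h2]
    rw [← mul_sum, ee_sum M hM]
    by_cases hab : a = b
    · subst hab; simp; ring
    · have : ¬ (M : ℤ) ∣ φ a - φ b := fun h => hab (hinj a ha b hb h)
      simp [this, hab]
  rw [sum_congr rfl h1]
  simp [ha]
  left
  rw [← Complex.ofReal_pow, h0]

/-- the divisor bound -/
lemma divisor_bound (ε : ℝ) (hε : 0 < ε) :
    ∃ C : ℝ, 1 ≤ C ∧ ∀ m : ℕ, 1 ≤ m → (#m.divisors : ℝ) ≤ C * (m : ℝ) ^ ε := by
  -- bound for small primes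
  obtain ⟨P, hP⟩ : ∃ P : ℕ, (2 : ℝ) ≤ (P : ℝ) ^ ε := by
    obtain ⟨P, hP⟩ := exists_nat_ge ((2 : ℝ) ^ (1 / ε))
    refine ⟨P, ?_⟩
    calc (2 : ℝ) = ((2 : ℝ) ^ (1 / ε)) ^ ε := by
          rw [← Real.rpow_mul (by norm_num)]; field_simp; simp
      _ ≤ _ := Real.rpow_le_rpow (by positivity) hP hε.le
  set D : ℝ := max 1 (1 / (ε * Real.log 2)) with hD
  have hl2 : 0 < Real.log 2 := Real.log_pos (by norm_num)
  have hD1 : 1 ≤ D := le_max_left _ _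
  have hsmall : ∀ a : ℕ, ∀ p : ℕ, 2 ≤ p → ((a : ℝ) + 1) ≤ D * ((p : ℝ) ^ a) ^ ε := by
    intro a p hp
    have h1 : ((2:ℝ) ^ a) ^ ε ≤ ((p : ℝ) ^ a) ^ ε := by
      apply Real.rpow_le_rpow (by positivity) _ hε.le
      apply pow_le_pow_left₀ (by norm_num)
      exact_mod_cast hp
    have h2 : ((2:ℝ) ^ a) ^ ε = Real.exp (a * (ε * Real.log 2)) := by
      rw [Real.rpow_def_of_pos (by positivity), Real.log_pow]; ring_nf
    have h3 : a * (ε * Real.log 2) + 1 ≤ Real.exp (a * (ε * Real.log 2)) := Real.add_one_le_exp _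
    have hx : 0 < ε * Real.log 2 := by positivity
    have h4 : 1 ≤ D * (ε * Real.log 2) := by
      calc 1 = 1 / (ε * Real.log 2) * (ε * Real.log 2) := by field_simp
        _ ≤ _ := by gcongr; exact le_max_right _ _
    calc (a : ℝ) + 1 ≤ a * (D * (ε * Real.log 2)) + D := by
          have : (a : ℝ) * 1 ≤ a * (D * (ε * Real.log 2)) := by gcongr
          linarith
      _ = D * (a * (ε * Real.log 2) + 1) := by ring
      _ ≤ D * ((p : ℝ) ^ a) ^ ε := by
          gcongr
          linarith
  have hlarge : ∀ a : ℕ, ∀ p : ℕ, P ≤ p → ((a : ℝ) + 1) ≤ 1 * ((p : ℝ) ^ a) ^ ε := by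
    intro a p hp
    have h1 : (2:ℝ) ≤ (p : ℝ) ^ ε := hP.trans
      (Real.rpow_le_rpow (by positivity) (by exact_mod_cast hp) hε.le)
    have h2 : ((p : ℝ) ^ a) ^ ε = ((p : ℝ) ^ ε) ^ a := by
      rw [← Real.rpow_natCast, ← Real.rpow_natCast, ← Real.rpow_mul (by positivity),
        ← Real.rpow_mul (by positivity), mul_comm]
    rw [h2, one_mul]
    calc (a : ℝ) + 1 ≤ 2 ^ a := by
          have : a < 2 ^ a := Nat.lt_two_pow_self
          exact_mod_cast this
      _ ≤ _ := by gcongr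
  refine ⟨D ^ P, one_le_pow₀ hD1, fun m hm => ?_⟩
  have hm0 : m ≠ 0 := by omega
  rw [Nat.card_divisors hm0]
  push_cast
  have hprod : (m : ℝ) ^ ε = ∏ p ∈ m.primeFactors, ((p : ℝ) ^ m.factorization p) ^ ε := by
    conv_lhs => rw [← Nat.prod_factorization_pow_eq_self hm0]
    rw [Real.finsetProd_rpow _ _ (fun i _ => by positivity)]
    congr 1
    rw [Finsupp.prod]
    push_cast
    rfl
  rw [hprod]
  calc ∏ p ∈ m.primeFactors, ((m.factorization p : ℝ) + 1)
      ≤ ∏ p ∈ m.primeFactors, ((if p < P then D else 1) * ((p : ℝ) ^ m.factorization p) ^ ε) := by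
        apply prod_le_prod (fun i _ => by positivity)
        intro p hp
        split_ifs with h
        · exact hsmall _ _ (Nat.prime_of_mem_primeFactors hp).two_le
        · exact hlarge _ _ (by omega)
    _ = (∏ p ∈ m.primeFactors, (if p < P then D else 1)) * ∏ p ∈ m.primeFactors, ((p : ℝ) ^ m.factorization p) ^ ε := prod_mul_distrib
    _ ≤ D ^ P * _ := by
        gcongr
        rw [prod_ite, prod_const, prod_const_one, mul_one]
        apply pow_le_pow_right₀ hD1
        calc _ ≤ #(range P) := card_le_card (by intro p hp; simp at hp ⊢; exact hp.2)
          _ = P := card_range P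

/-- `∑_{m ≤ L} m^{-8/9} ≤ 9 L^{1/9}` -/
lemma sum_rpow_bound (L : ℕ) :
    ∑ m ∈ Icc 1 L, ((m : ℝ)) ^ (-(8:ℝ)/9) ≤ 9 * (L : ℝ) ^ ((1:ℝ)/9) := by
  induction L with
  | zero => simp
  | succ L ih =>
    rw [sum_Icc_succ_top (by omega)]
    push_cast
    have hpos : (0:ℝ) < (L:ℝ) + 1 := by positivity
    have h1 : (L : ℝ) ^ ((1:ℝ)/9) ≤ ((L:ℝ)+1) ^ ((1:ℝ)/9) * (1 + (1/9) * (-(1/((L:ℝ)+1)))) := by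
      have h2 : (L:ℝ) = ((L:ℝ)+1) * (1 + (-(1/((L:ℝ)+1)))) := by field_simp; ring
      have h4 : (1:ℝ) / ((L:ℝ)+1) ≤ 1 := by
        rw [div_le_one hpos]; linarith [(Nat.cast_nonneg L : (0:ℝ) ≤ L)]
      have h3 := rpow_one_add_le_one_add_mul_self (s := -(1/((L:ℝ)+1))) (by linarith)
        (p := 1/9) (by norm_num) (by norm_num)
      conv_lhs => rw [h2]
      rw [Real.mul_rpow hpos.le (by linarith)]
      gcongr
    have h5 : ((L:ℝ)+1) ^ (-(8:ℝ)/9) = ((L:ℝ)+1) ^ ((1:ℝ)/9) * (1/((L:ℝ)+1)) := by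
      rw [show (-(8:ℝ)/9) = 1/9 - 1 by norm_num, Real.rpow_sub hpos, Real.rpow_one]; ring
    rw [h5]
    nlinarith

/-- truncated divisor function -/
def dQ (Q k : ℕ) : ℕ := #{d ∈ Icc 1 Q | d ∣ k}

/-- moments of the truncated divisor function -/
lemma dQ_moment (B : ℕ) (hB : 1 ≤ B) : ∃ C : ℝ, 1 ≤ C ∧ ∀ Q K : ℕ, 1 ≤ Q →
    ∑ k ∈ Icc 1 K, (dQ Q k : ℝ) ^ B ≤ C * K * Q := by
  have hB0 : (0:ℝ) < B := by exact_mod_cast hB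
  obtain ⟨C, hC, hdiv⟩ := divisor_bound (1 / (9 * B * B)) (by positivity)
  refine ⟨C ^ B * (1 + 2 * B), by nlinarith [one_le_pow₀ hC (n := B)], fun Q K hQ => ?_⟩
  classical
  let T : Finset (Fin B → ℕ) := Fintype.piFinset fun _ => Icc 1 Q
  let l : (Fin B → ℕ) → ℕ := fun t => univ.lcm t
  have hT1 : ∀ t ∈ T, ∀ i, 1 ≤ t i ∧ t i ≤ Q := by
    intro t ht i
    have := Fintype.mem_piFinset.1 ht i
    simpa using this
  have h1 : ∀ k, (dQ Q k : ℝ) ^ B = ∑ t ∈ T, if l t ∣ k then (1:ℝ) else 0 := by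
    intro k
    rw [sum_boole]
    norm_cast
    have : (T.filter fun t => l t ∣ k) = Fintype.piFinset (fun _ : Fin B => {d ∈ Icc 1 Q | d ∣ k}) := by
      ext t
      simp only [T, l, mem_filter, Fintype.mem_piFinset, Finset.lcm_dvd_iff, mem_univ, true_implies]
      exact ⟨fun h i => ⟨h.1 i, h.2 i⟩, fun h => ⟨fun i => (h i).1, fun i => (h i).2⟩⟩
    rw [this, Fintype.card_piFinset]
    simp [dQ]
  simp_rw [h1]
  rw [sum_comm]
  have hlpos : ∀ t ∈ T, 1 ≤ l t := by
    intro t ht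
    have : l t ≠ 0 := by
      simp only [l, Ne, Finset.lcm_eq_zero_iff]
      rintro ⟨i, _, hi⟩
      have := hT1 t ht i
      omega
    omega
  have hlle : ∀ t ∈ T, l t ≤ Q ^ B := by
    intro t ht
    have h2 : l t ∣ ∏ i, t i := Finset.lcm_dvd fun i _ => dvd_prod_of_mem _ (mem_univ i)
    have h3 : 0 < ∏ i, t i := prod_pos fun i _ => (hT1 t ht i).1
    calc l t ≤ ∏ i, t i := Nat.le_of_dvd h3 h2
      _ ≤ ∏ i : Fin B, Q := prod_le_prod' fun i _ => (hT1 t ht i).2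
      _ = Q ^ B := by simp
  have h2 : ∀ t ∈ T, ∑ k ∈ Icc 1 K, (if l t ∣ k then (1:ℝ) else 0) ≤ K / (l t : ℝ) := by
    intro t ht
    rw [sum_boole]
    have : #{k ∈ Icc 1 K | l t ∣ k} = K / l t := by
      have := Nat.Ioc_filter_dvd_card_eq_div K (l t)
      rw [← this]; congr 1
    rw [this]
    exact Nat.cast_div_le
  refine (sum_le_sum h2).trans ?_
  have h3 : ∑ t ∈ T, (K : ℝ) / (l t : ℝ) = ∑ m ∈ Icc 1 (Q ^ B), ∑ t ∈ T with l t = m, (K:ℝ) / (l t : ℝ) := by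
    rw [sum_fiberwise_of_maps_to]
    intro t ht
    simp [hlpos t ht, hlle t ht]
  rw [h3]
  have h4 : ∀ m ∈ Icc 1 (Q ^ B), ∑ t ∈ T with l t = m, (K:ℝ) / (l t : ℝ) ≤
      K * (C ^ B * (Q:ℝ) ^ ((1:ℝ)/9)) * (m:ℝ)⁻¹ := by
    intro m hm
    rw [mem_Icc] at hm
    have hm1 : (1:ℝ) ≤ m := by exact_mod_cast hm.1
    have h5 : (#{t ∈ T | l t = m} : ℝ) ≤ (#m.divisors : ℝ) ^ B := by
      norm_cast
      have : {t ∈ T | l t = m} ⊆ Fintype.piFinset (fun _ : Fin B => m.divisors) := by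
        intro t ht
        rw [mem_filter] at ht
        rw [Fintype.mem_piFinset]
        intro i
        rw [Nat.mem_divisors]
        refine ⟨?_, by omega⟩
        rw [← ht.2]
        exact Finset.dvd_lcm (mem_univ i)
      refine (card_le_card this).trans ?_
      rw [Fintype.card_piFinset]; simp
    have h6 : (#m.divisors : ℝ) ^ B ≤ C ^ B * (Q:ℝ) ^ ((1:ℝ)/9) := by
      calc (#m.divisors : ℝ) ^ B ≤ (C * (m:ℝ) ^ (1 / (9 * B * B : ℝ))) ^ B := by
            gcongr; exact hdiv m hm.1
        _ = C ^ B * ((m:ℝ) ^ (1 / (9 * B * B : ℝ))) ^ B := mul_pow _ _ _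
        _ = C ^ B * (m:ℝ) ^ (1 / (9 * B : ℝ)) := by
            congr 1
            rw [← Real.rpow_natCast, ← Real.rpow_mul (by positivity)]
            congr 1
            field_simp
        _ ≤ C ^ B * ((Q:ℝ) ^ B) ^ (1 / (9 * B : ℝ)) := by
            gcongr
            exact_mod_cast hm.2
        _ = _ := by
            congr 1
            rw [← Real.rpow_natCast, ← Real.rpow_mul (by positivity)]
            congr 1
            field_simp
    calc ∑ t ∈ T with l t = m, (K:ℝ) / (l t : ℝ) = ∑ t ∈ T with l t = m, (K:ℝ) / (m : ℝ) := by
          refine sum_congr rfl fun t ht => ?_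
          rw [(mem_filter.1 ht).2]
      _ = #{t ∈ T | l t = m} * ((K:ℝ) / m) := by rw [sum_const, nsmul_eq_mul]
      _ ≤ (C ^ B * (Q:ℝ) ^ ((1:ℝ)/9)) * (K / m) := by gcongr; exact h5.trans h6
      _ = _ := by field_simp
  refine (sum_le_sum h4).trans ?_
  rw [← mul_sum]
  have hQ1 : (1:ℝ) ≤ Q := by exact_mod_cast hQ
  have hQp : (0:ℝ) < Q := by linarith
  have h7 : ∑ m ∈ Icc 1 (Q ^ B), (m:ℝ)⁻¹ ≤ (1 + 2 * B) * (Q:ℝ) ^ ((8:ℝ)/9) := by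
    have h8 := harmonic_le_one_add_log (Q ^ B)
    rw [harmonic_eq_sum_Icc] at h8
    push_cast at h8
    rw [Real.log_pow] at h8
    have h9 : Real.log Q ≤ (Q:ℝ) ^ ((8:ℝ)/9) / (8/9) := Real.log_le_rpow_div hQp.le (by norm_num)
    have h10 : (1:ℝ) ≤ (Q:ℝ) ^ ((8:ℝ)/9) := Real.one_le_rpow hQ1 (by norm_num)
    have h11 : (B:ℝ) * Real.log Q ≤ B * (2 * (Q:ℝ) ^ ((8:ℝ)/9)) := by
      gcongr
      linarith
    linarith
  calc _ ≤ (K * (C ^ B * (Q:ℝ) ^ ((1:ℝ)/9))) * ((1 + 2 * B) * (Q:ℝ) ^ ((8:ℝ)/9)) := by gcongr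
    _ = C ^ B * (1 + 2 * B) * K * ((Q:ℝ) ^ ((1:ℝ)/9) * (Q:ℝ) ^ ((8:ℝ)/9)) := by ring
    _ = _ := by
      rw [← Real.rpow_add hQp]
      norm_num

/-- distance to the nearest integer -/
def nn (x : ℝ) : ℝ := |x - round x|

lemma nn_nonneg (x : ℝ) : 0 ≤ nn x := abs_nonneg _

lemma nn_le (x : ℝ) (k : ℤ) : nn x ≤ |x - k| := round_le x k

/-- The Weyl sum over squares -/
def KK (N : ℕ) (α : ℝ) : ℂ := ∑ x ∈ Icc (-(N:ℤ)) N, ee ((x:ℝ) ^ 2 * α)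

lemma card_IccN (N : ℕ) : #(Icc (-(N:ℤ)) N) = 2 * N + 1 := by
  rw [Int.card_Icc]; omega

lemma geom_bound (a b : ℤ) (θ : ℝ) : ‖∑ x ∈ Icc a b, ee (x * θ)‖ * nn θ ≤ 2 := by
  have h1 : ∑ x ∈ Icc a b, ee (x * θ) = ∑ i ∈ range (b + 1 - a).toNat, ee (a * θ) * ee θ ^ i := by
    have : Icc a b = (range (b + 1 - a).toNat).image (fun i : ℕ => a + (i:ℤ)) := by
      ext x
      simp only [mem_Icc, mem_image, mem_range]
      constructor
      · intro h
        exact ⟨(x - a).toNat, by omega, by omega⟩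
      · rintro ⟨i, hi, rfl⟩
        omega
    rw [this, sum_image (by intro i _ j _ h; simpa using h)]
    refine sum_congr rfl fun i _ => ?_
    rw [← ee_nat_mul, ← ee_add]
    congr 1; push_cast; ring
  rw [h1, ← mul_sum, norm_mul, ee_norm, one_mul]
  calc _ ≤ ‖∑ i ∈ range (b + 1 - a).toNat, ee θ ^ i‖ * ‖ee θ - 1‖ := by
        gcongr; exact ee_sub_one_ge θ
    _ = ‖ee θ ^ (b + 1 - a).toNat - 1‖ := by rw [← norm_mul, geom_sum_mul]
    _ ≤ ‖ee θ ^ (b + 1 - a).toNat‖ + ‖(1:ℂ)‖ := norm_sub_le _ _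
    _ = 2 := by rw [norm_pow, ee_norm]; norm_num

lemma weyl_diff (N : ℕ) (α : ℝ) : ∃ g : ℕ → ℝ,
    (∀ h, 0 ≤ g h ∧ g h ≤ 2 * N + 1 ∧ g h * nn (h * (2 * α)) ≤ 2) ∧
    ‖KK N α‖ ^ 2 ≤ (2 * N + 1) + 2 * ∑ h ∈ Icc 1 (2 * N), g h := by
  refine ⟨fun h => ‖∑ y ∈ Icc (-(N:ℤ)) (N - h), ee (y * (h * (2 * α)))‖, fun h => ⟨norm_nonneg _, ?_,
    geom_bound _ _ _⟩, ?_⟩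
  · calc _ ≤ ∑ y ∈ Icc (-(N:ℤ)) (N - h), ‖ee (y * (h * (2 * α)))‖ := norm_sum_le _ _
      _ = #(Icc (-(N:ℤ)) (N - h)) := by simp [ee_norm]
      _ ≤ _ := by
        rw [Int.card_Icc]
        have : (N - h + 1 - -(N:ℤ)).toNat ≤ 2 * N + 1 := by omega
        exact_mod_cast this
  · set I := Icc (-(N:ℤ)) N with hI
    let F : ℤ × ℤ → ℂ := fun p => ee (((p.1:ℝ) ^ 2 - (p.2:ℝ) ^ 2) * α)
    have h1 : KK N α * (starRingEnd ℂ) (KK N α) = ∑ p ∈ I ×ˢ I, F p := by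
      unfold KK
      rw [map_sum, sum_mul_sum, sum_product]
      refine sum_congr rfl fun x _ => sum_congr rfl fun y _ => ?_
      rw [ee_conj, ← ee_add]
      congr 1; ring
    have h2 : ‖KK N α‖ ^ 2 = ‖∑ p ∈ I ×ˢ I, F p‖ := by
      rw [← h1, norm_mul, RCLike.norm_conj]; ring
    have h3 : ∑ p ∈ I ×ˢ I, F p = ∑ p ∈ I ×ˢ I with p.1 = p.2, F p +
        (∑ p ∈ I ×ˢ I with p.2 < p.1, F p + ∑ p ∈ I ×ˢ I with p.1 < p.2, F p) := by
      rw [sum_filter, sum_filter, sum_filter, ← sum_add_distrib, ← sum_add_distrib]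
      refine sum_congr rfl fun p _ => ?_
      rcases lt_trichotomy p.1 p.2 with h | h | h
      · simp [h, h.ne, h.not_gt]
      · simp [h]
      · simp [h, h.ne', h.not_gt]
    have h4 : ∑ p ∈ I ×ˢ I with p.1 < p.2, F p = (starRingEnd ℂ) (∑ p ∈ I ×ˢ I with p.2 < p.1, F p) := by
      rw [map_sum]
      refine sum_nbij' (fun p => (p.2, p.1)) (fun p => (p.2, p.1)) ?_ ?_ ?_ ?_ ?_
      · intro p hp; simp at hp ⊢; tauto
      · intro p hp; simp at hp ⊢; tauto
      · intro p hp; rfl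
      · intro p hp; rfl
      · intro p hp
        simp only [F]
        rw [ee_conj]
        congr 1; ring
    have h5 : ‖∑ p ∈ I ×ˢ I with p.1 = p.2, F p‖ ≤ 2 * N + 1 := by
      calc _ ≤ ∑ p ∈ I ×ˢ I with p.1 = p.2, ‖F p‖ := norm_sum_le _ _
        _ = #{p ∈ I ×ˢ I | p.1 = p.2} := by simp [F, ee_norm]
        _ ≤ #I := by
          norm_cast
          apply card_le_card_of_injOn (fun p => p.1)
          · intro p hp; simp at hp ⊢; exact hp.1.1
          · intro p hp p' hp' h
            simp at hp hp' h
            ext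
            · exact h
            · rw [← hp.2, ← hp'.2]; exact h
        _ = _ := by rw [hI, card_IccN]; push_cast; ring
    have h6 : ∑ p ∈ I ×ˢ I with p.2 < p.1, F p =
        ∑ h ∈ Icc 1 (2 * N), ∑ y ∈ Icc (-(N:ℤ)) (N - h), F (y + h, y) := by
      rw [sum_sigma']
      refine sum_nbij' (fun p => ⟨(p.1 - p.2).toNat, p.2⟩) (fun s => (s.2 + s.1, s.2)) ?_ ?_ ?_ ?_ ?_
      · intro p hp; simp [I] at hp ⊢; omega
      · intro p hp; simp [I] at hp ⊢; omega
      · intro p hp; simp [I] at hp ⊢; ext <;> simp; omega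
      · intro p hp; simp at hp ⊢
      · intro p hp
        simp [I] at hp ⊢
        rw [max_eq_left (by omega)]; simp
    have h7 : ‖∑ p ∈ I ×ˢ I with p.2 < p.1, F p‖ ≤ ∑ h ∈ Icc 1 (2 * N),
        ‖∑ y ∈ Icc (-(N:ℤ)) (N - h), ee (y * (h * (2 * α)))‖ := by
      rw [h6]
      refine (norm_sum_le _ _).trans (sum_le_sum fun h _ => le_of_eq ?_)
      have : ∀ y : ℤ, F (y + h, y) = ee ((h:ℝ) ^ 2 * α) * ee (y * (h * (2 * α))) := by
        intro y
        simp only [F]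
        rw [← ee_add]
        congr 1; push_cast; ring
      simp_rw [this]
      rw [← mul_sum, norm_mul, ee_norm, one_mul]
    rw [h2, h3, h4]
    refine (norm_add_le _ _).trans ?_
    refine add_le_add h5 ((norm_add_le _ _).trans ?_)
    rw [RCLike.norm_conj]
    linarith

/-- Dirichlet approximation and control of the differenced sum. -/
lemma weyl_sum (N : ℕ) (hN : 1 ≤ N) (α : ℝ) : ∃ q : ℕ, 1 ≤ q ∧ ∀ g : ℕ → ℝ,
    (∀ h, 0 ≤ g h ∧ g h ≤ 2 * N + 1 ∧ g h * nn (h * α) ≤ 2) →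
    ∃ S : ℝ, 0 ≤ S ∧ ∑ h ∈ Icc 1 (2 * N), g h ≤ 2000 * (N:ℝ) ^ ((10:ℝ)/9) + S ∧
      S * q ≤ 6 * (N:ℝ) ^ 2 ∧
      S * nn (q * α) ^ ((8:ℝ)/9) ≤ 100 * (N:ℝ) ^ ((2:ℝ)/9) := by
  obtain ⟨ρ, hρ1, hρ2⟩ := Real.exists_rat_abs_sub_le_and_den_le α (n := 8 * N) (by omega)
  set q := ρ.den with hq
  have hq1 : 1 ≤ q := ρ.den_pos
  have hqR : (1:ℝ) ≤ q := by exact_mod_cast hq1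
  have hNR : (1:ℝ) ≤ N := by exact_mod_cast hN
  refine ⟨q, hq1, fun g hg => ?_⟩
  have hρ : (ρ:ℝ) = ρ.num / q := by rw [hq]; exact_mod_cast (Rat.num_div_den ρ).symm
  set β := α - ρ with hβ
  have hα : α = ρ.num / q + β := by rw [hβ, hρ]; ring
  have hqβ : |β| * (8 * N * q) ≤ 1 := by
    have h1 : (0:ℝ) < ((8 * N : ℕ) + 1) * q := by positivity
    rw [le_div_iff₀ h1] at hρ1
    push_cast at hρ1
    nlinarith [abs_nonneg β]
  -- the multiples of q
  refine ⟨∑ h ∈ Icc 1 (2 * N) with q ∣ h, g h, sum_nonneg fun h _ => (hg h).1, ?_, ?_, ?_⟩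
  · rw [← sum_filter_add_sum_filter_not (Icc 1 (2 * N)) (fun h => q ∣ h), add_comm]
    gcongr
    let r : ℕ → ℤ := fun h => h * ρ.num - q * round (h * α)
    have hr : ∀ h ∈ Icc 1 (2 * N), ¬ q ∣ h → r h ≠ 0 ∧ (r h).natAbs ≤ q ∧
        g h ≤ 3 * q * ((r h).natAbs : ℝ)⁻¹ := by
      intro h hh hqh
      rw [mem_Icc] at hh
      have h0 : r h ≠ 0 := by
        intro h0
        apply hqh
        have h1 : (q:ℤ) ∣ h * ρ.num := ⟨round (h * α), by simp only [r] at h0; linarith⟩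
        have h2 : q ∣ h * ρ.num.natAbs := by
          have := Int.natAbs_dvd_natAbs.2 h1
          simpa [Int.natAbs_mul] using this
        exact (Nat.Coprime.dvd_of_dvd_mul_right ρ.reduced.symm h2)
      have hhR : (h:ℝ) ≤ 2 * N := by exact_mod_cast hh.2
      have h1 : (r h : ℝ) = q * (h * α - round (h * α)) - q * (h * β) := by
        simp only [r]; push_cast; rw [hα]; field_simp; ring
      have h2 : |(q:ℝ) * (h * β)| ≤ 1 / 4 := by
        rw [abs_mul, abs_mul, abs_of_nonneg (by positivity : (0:ℝ) ≤ q), abs_of_nonneg (by positivity : (0:ℝ) ≤ h)]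
        have : (q:ℝ) * (h * |β|) ≤ q * (2 * N * |β|) := by gcongr
        linarith
      have h3 : |(r h : ℝ)| ≤ q * nn (h * α) + 1 / 4 := by
        rw [h1]
        refine (abs_sub _ _).trans ?_
        rw [abs_mul (q:ℝ) (h * α - _), abs_of_nonneg (by positivity : (0:ℝ) ≤ q)]
        exact add_le_add le_rfl h2
      have h4 : ((r h).natAbs : ℝ) = |(r h : ℝ)| := by
        rw [← Int.cast_abs, Nat.cast_natAbs]
      have h5 : (1:ℝ) ≤ ((r h).natAbs : ℝ) := by
        have := Int.natAbs_pos.2 h0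
        exact_mod_cast this
      have h6 : nn (h * α) ≤ 1 / 2 := abs_sub_round _
      refine ⟨h0, ?_, ?_⟩
      · have : ((r h).natAbs : ℝ) ≤ q := by
          rw [h4]; nlinarith
        exact_mod_cast this
      · rw [← div_eq_mul_inv, le_div_iff₀ (by linarith)]
        have h7 := (hg h).2.2
        have h8 : ((r h).natAbs : ℝ) * (3/4) ≤ q * nn (h * α) := by
          rw [h4] at h5 ⊢; linarith
        have h9 := mul_le_mul_of_nonneg_left h8 (hg h).1
        nlinarith
    let w : ℕ × ℤ → ℝ := fun p => 3 * q * (p.2.natAbs : ℝ)⁻¹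
    let T : Finset (ℕ × ℤ) := range (2 * N / q + 1) ×ˢ ((Icc (-(q:ℤ)) q).erase 0)
    have h1 : ∑ h ∈ Icc 1 (2 * N) with ¬ q ∣ h, g h ≤ ∑ p ∈ T, w p := by
      have hinj : Set.InjOn (fun h : ℕ => (h / q, r h)) ({h ∈ Icc 1 (2 * N) | ¬ q ∣ h} : Finset ℕ) := by
        intro h hh h' hh' heq
        simp only [Prod.mk.injEq] at heq
        obtain ⟨e1, e2⟩ := heq
        simp only [r] at e2
        have h3 : (q:ℤ) ∣ ((h:ℤ) - h') * ρ.num := ⟨round (h * α) - round (h' * α), by linarith⟩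
        have h4 : (q:ℤ) ∣ (h:ℤ) - h' := by
          apply IsCoprime.dvd_of_dvd_mul_right _ h3
          exact (Rat.isCoprime_num_den ρ).symm
        have h5 : h % q = h' % q := by
          have h6 : (h:ℤ) % q = h' % q := Int.emod_eq_emod_iff_emod_sub_eq_zero.2 (Int.emod_eq_zero_of_dvd h4)
          exact_mod_cast h6
        rw [← Nat.div_add_mod h q, ← Nat.div_add_mod h' q, e1, h5]
      calc _ ≤ ∑ h ∈ Icc 1 (2 * N) with ¬ q ∣ h, w (h / q, r h) := by
            refine sum_le_sum fun h hh => ?_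
            rw [mem_filter] at hh
            exact (hr h hh.1 hh.2).2.2
        _ = ∑ p ∈ ({h ∈ Icc 1 (2 * N) | ¬ q ∣ h} : Finset ℕ).image (fun h => (h / q, r h)), w p := by
            rw [sum_image hinj]
        _ ≤ _ := by
            apply sum_le_sum_of_subset_of_nonneg
            · intro p hp
              rw [mem_image] at hp
              obtain ⟨h, hh, rfl⟩ := hp
              rw [mem_filter] at hh
              obtain ⟨a1, a2, _⟩ := hr h hh.1 hh.2
              simp only [T, mem_product, mem_range, mem_erase, mem_Icc]
              refine ⟨?_, a1, by omega, by omega⟩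
              have := (mem_Icc.1 hh.1).2
              exact Nat.lt_succ_of_le (Nat.div_le_div_right this)
            · intro p _ _
              simp only [w]; positivity
    have h2 : ∑ p ∈ T, w p = (2 * N / q + 1 : ℕ) * (2 * ∑ i ∈ Icc 1 q, 3 * q * (i:ℝ)⁻¹) := by
      rw [sum_product]
      simp only [w]
      rw [sum_const, card_range, nsmul_eq_mul]
      congr 1
      have : (Icc (-(q:ℤ)) q).erase 0 = (Icc 1 q).image (fun i : ℕ => (i:ℤ)) ∪ (Icc 1 q).image (fun i : ℕ => -(i:ℤ)) := by
        ext x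
        simp only [mem_erase, mem_Icc, mem_union, mem_image]
        constructor
        · intro h
          rcases lt_or_gt_of_ne h.1 with h' | h'
          · right; exact ⟨x.natAbs, by omega, by omega⟩
          · left; exact ⟨x.natAbs, by omega, by omega⟩
        · rintro (⟨i, hi, rfl⟩ | ⟨i, hi, rfl⟩) <;> omega
      rw [this, sum_union, sum_image (by intro i _ j _ h; simpa using h), sum_image (by intro i _ j _ h; simpa using h)]
      · simp; ring
      · rw [disjoint_left]
        intro x hx hx'
        simp only [mem_image, mem_Icc] at hx hx'
        obtain ⟨i, hi, rfl⟩ := hx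
        obtain ⟨j, hj, h⟩ := hx'
        omega
    have h3 : ∑ i ∈ Icc 1 q, 3 * q * (i:ℝ)⁻¹ ≤ 3 * q * (9 * (q:ℝ) ^ ((1:ℝ)/9)) := by
      rw [← mul_sum]
      gcongr
      refine (sum_le_sum fun i hi => ?_).trans (sum_rpow_bound q)
      rw [← Real.rpow_neg_one]
      apply Real.rpow_le_rpow_of_exponent_le
      · exact_mod_cast (mem_Icc.1 hi).1
      · norm_num
    have h4 : ((2 * N / q + 1 : ℕ) : ℝ) * q ≤ 10 * N := by
      have : (2 * N / q + 1) * q ≤ 10 * N := by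
        rw [add_mul]
        have := Nat.div_mul_le_self (2 * N) q
        omega
      exact_mod_cast this
    have h5 : (q:ℝ) ^ ((1:ℝ)/9) ≤ 2 * (N:ℝ) ^ ((1:ℝ)/9) := by
      calc (q:ℝ) ^ ((1:ℝ)/9) ≤ (8 * (N:ℝ)) ^ ((1:ℝ)/9) := by
            gcongr; exact_mod_cast hρ2
        _ = 8 ^ ((1:ℝ)/9) * (N:ℝ) ^ ((1:ℝ)/9) := Real.mul_rpow (by norm_num) (by positivity)
        _ ≤ _ := by
            gcongr
            calc (8:ℝ) ^ ((1:ℝ)/9) ≤ (8:ℝ) ^ ((1:ℝ)/3) := by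
                  apply Real.rpow_le_rpow_of_exponent_le <;> norm_num
              _ = 2 := by
                  rw [show (8:ℝ) = 2 ^ (3:ℝ) by norm_num, ← Real.rpow_mul (by norm_num)]; norm_num
    calc _ ≤ _ := h1
      _ = _ := h2
      _ ≤ (2 * N / q + 1 : ℕ) * (2 * (3 * q * (9 * (2 * (N:ℝ) ^ ((1:ℝ)/9))))) := by
          gcongr
          refine h3.trans ?_
          gcongr
      _ = (((2 * N / q + 1 : ℕ) : ℝ) * q) * (108 * (N:ℝ) ^ ((1:ℝ)/9)) := by ring
      _ ≤ (10 * N) * (108 * (N:ℝ) ^ ((1:ℝ)/9)) := by gcongr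
      _ = 1080 * ((N:ℝ) * (N:ℝ) ^ ((1:ℝ)/9)) := by ring
      _ = 1080 * (N:ℝ) ^ ((10:ℝ)/9) := by
          rw [← Real.rpow_one_add' (by positivity) (by norm_num)]; norm_num
      _ ≤ _ := by gcongr; norm_num
  · have h1 : ∑ h ∈ Icc 1 (2 * N) with q ∣ h, g h ≤ ∑ h ∈ Icc 1 (2 * N) with q ∣ h, (2 * (N:ℝ) + 1) :=
      sum_le_sum fun h _ => (hg h).2.1
    rw [sum_const, nsmul_eq_mul] at h1
    have h2 : #{h ∈ Icc 1 (2 * N) | q ∣ h} * q ≤ 2 * N := by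
      have := Nat.Ioc_filter_dvd_card_eq_div (2 * N) q
      have h3 : #{h ∈ Icc 1 (2 * N) | q ∣ h} = 2 * N / q := by rw [← this]; congr 1
      rw [h3]; exact Nat.div_mul_le_self _ _
    have h2' : (#{h ∈ Icc 1 (2 * N) | q ∣ h} : ℝ) * q ≤ 2 * N := by exact_mod_cast h2
    calc _ ≤ (#{h ∈ Icc 1 (2 * N) | q ∣ h} : ℝ) * (2 * N + 1) * q := by gcongr
      _ = ((#{h ∈ Icc 1 (2 * N) | q ∣ h} : ℝ) * q) * (2 * N + 1) := by ring
      _ ≤ (2 * N) * (3 * N) := by gcongr; linarith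
      _ = _ := by ring
  · have himg : ({h ∈ Icc 1 (2 * N) | q ∣ h} : Finset ℕ) ⊆ (Icc 1 (2 * N)).image (fun m => q * m) := by
      intro h hh
      rw [mem_filter, mem_Icc] at hh
      obtain ⟨⟨h1, h2⟩, m, rfl⟩ := hh
      rw [mem_image]
      refine ⟨m, ?_, rfl⟩
      rw [mem_Icc]
      constructor
      · by_contra h; have : m = 0 := by omega
        subst this; omega
      · exact (Nat.le_mul_of_pos_left m hq1).trans h2
    have hkey : ∀ h ∈ ({h ∈ Icc 1 (2 * N) | q ∣ h} : Finset ℕ), g h * nn (q * α) ^ ((8:ℝ)/9) ≤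
        (3 * N) ^ ((1:ℝ)/9) * 2 * ((h / q : ℕ) : ℝ) ^ (-(8:ℝ)/9) := by
      intro h hh
      rw [mem_filter, mem_Icc] at hh
      obtain ⟨⟨h1, h2⟩, m, rfl⟩ := hh
      rw [Nat.mul_div_cancel_left _ hq1]
      have hm : 1 ≤ m := by
        by_contra h; have : m = 0 := by omega
        subst this; omega
      have hmR : (1:ℝ) ≤ m := by exact_mod_cast hm
      have hh2 : (q:ℝ) * m ≤ 2 * N := by exact_mod_cast h2
      have hqa : nn (q * α) ≤ |q * β| := by
        have := nn_le (q * α) ρ.num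
        refine this.trans (le_of_eq ?_)
        congr 1
        rw [hα]; field_simp; ring
      have hnn : nn ((q * m : ℕ) * α) = m * |q * β| := by
        have e1 : ((q * m : ℕ) : ℝ) * α = (m * ρ.num : ℤ) + m * (q * β) := by
          push_cast; rw [hα]; field_simp
        have e2 : |(m:ℝ) * (q * β)| ≤ 1 / 4 := by
          rw [← mul_assoc, abs_mul, abs_of_nonneg (by positivity)]
          have : (m:ℝ) * q * |β| ≤ 2 * N * |β| := by
            rw [mul_comm (m:ℝ)]; gcongr
          nlinarith [abs_nonneg β, mul_le_mul_of_nonneg_left hqR (by positivity : 0 ≤ |β| * (8 * N))]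
        have e3 : round ((m:ℝ) * (q * β)) = 0 := by
          rw [round_eq_zero_iff]
          rw [abs_le] at e2
          constructor <;> linarith [e2.1, e2.2]
        unfold nn
        rw [e1, round_intCast_add, e3]
        push_cast
        rw [show (m:ℝ) * ρ.num + m * (q * β) - (m * ρ.num + 0) = m * (q * β) by ring, abs_mul, abs_of_nonneg (by positivity : (0:ℝ) ≤ m)]
      obtain ⟨g0, g1, g2⟩ := hg (q * m)
      rw [hnn] at g2
      set G := g (q * m)
      have e4 : G = G ^ ((1:ℝ)/9) * G ^ ((8:ℝ)/9) := by
        rw [← Real.rpow_add' g0 (by norm_num)]; norm_num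
      have e5 : G * nn (q * α) ≤ 2 * (m:ℝ)⁻¹ := by
        rw [← div_eq_mul_inv, le_div_iff₀ (by linarith)]
        calc G * nn (q * α) * m ≤ G * |q * β| * m := by gcongr
          _ = G * (m * |q * β|) := by ring
          _ ≤ 2 := g2
      have e6 : (G * nn (q * α)) ^ ((8:ℝ)/9) ≤ 2 * (m:ℝ) ^ (-(8:ℝ)/9) := by
        calc _ ≤ (2 * (m:ℝ)⁻¹) ^ ((8:ℝ)/9) := by
              apply Real.rpow_le_rpow _ e5 (by norm_num)
              exact mul_nonneg g0 (nn_nonneg _)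
          _ = 2 ^ ((8:ℝ)/9) * (m:ℝ) ^ (-(8:ℝ)/9) := by
              rw [Real.mul_rpow (by norm_num) (by positivity), Real.inv_rpow (by positivity), neg_div, Real.rpow_neg (by positivity)]
          _ ≤ _ := by
              gcongr
              calc (2:ℝ) ^ ((8:ℝ)/9) ≤ 2 ^ (1:ℝ) := by
                    apply Real.rpow_le_rpow_of_exponent_le <;> norm_num
                _ = 2 := by norm_num
      calc G * nn (q * α) ^ ((8:ℝ)/9) = G ^ ((1:ℝ)/9) * (G * nn (q * α)) ^ ((8:ℝ)/9) := by
            rw [Real.mul_rpow g0 (nn_nonneg _)]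
            conv_lhs => rw [e4]
            ring
        _ ≤ (3 * N) ^ ((1:ℝ)/9) * (2 * (m:ℝ) ^ (-(8:ℝ)/9)) := by
            have e7 : G ≤ 3 * N := by linarith
            have e8 : 0 ≤ (G * nn (q * α)) ^ ((8:ℝ)/9) :=
              Real.rpow_nonneg (mul_nonneg g0 (nn_nonneg _)) _
            exact mul_le_mul (Real.rpow_le_rpow g0 e7 (by norm_num)) e6 e8 (by positivity)
        _ = _ := by ring
    rw [sum_mul]
    calc _ ≤ ∑ h ∈ ({h ∈ Icc 1 (2 * N) | q ∣ h} : Finset ℕ), (3 * (N:ℝ)) ^ ((1:ℝ)/9) * 2 * ((h / q : ℕ) : ℝ) ^ (-(8:ℝ)/9) := sum_le_sum hkey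
      _ ≤ ∑ h ∈ (Icc 1 (2 * N)).image (fun m => q * m), (3 * (N:ℝ)) ^ ((1:ℝ)/9) * 2 * ((h / q : ℕ) : ℝ) ^ (-(8:ℝ)/9) := by
          apply sum_le_sum_of_subset_of_nonneg himg
          intro i _ _; positivity
      _ = ∑ m ∈ Icc 1 (2 * N), (3 * (N:ℝ)) ^ ((1:ℝ)/9) * 2 * (m : ℝ) ^ (-(8:ℝ)/9) := by
          rw [sum_image (by intro i _ j _ h; simpa [show q ≠ 0 by omega] using h)]
          refine sum_congr rfl fun m _ => ?_
          rw [Nat.mul_div_cancel_left _ hq1]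
      _ ≤ (3 * (N:ℝ)) ^ ((1:ℝ)/9) * 2 * (9 * ((2 * N : ℕ) : ℝ) ^ ((1:ℝ)/9)) := by
          rw [← mul_sum]; gcongr; exact sum_rpow_bound _
      _ = 18 * (3 ^ ((1:ℝ)/9) * 2 ^ ((1:ℝ)/9)) * ((N:ℝ) ^ ((1:ℝ)/9) * (N:ℝ) ^ ((1:ℝ)/9)) := by
          push_cast
          rw [Real.mul_rpow (by norm_num) (by positivity), Real.mul_rpow (by norm_num) (by positivity)]; ring
      _ ≤ 18 * (3 * 1.5) * ((N:ℝ) ^ ((1:ℝ)/9) * (N:ℝ) ^ ((1:ℝ)/9)) := by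
          gcongr
          · calc (3:ℝ) ^ ((1:ℝ)/9) ≤ 3 ^ (1:ℝ) := by
                    apply Real.rpow_le_rpow_of_exponent_le <;> norm_num
                _ = 3 := by norm_num
          · calc (2:ℝ) ^ ((1:ℝ)/9) ≤ 2 ^ ((1:ℝ)/2) := by
                    apply Real.rpow_le_rpow_of_exponent_le <;> norm_num
                _ ≤ 1.5 := by
                  rw [← Real.sqrt_eq_rpow, Real.sqrt_le_left (by norm_num)]; norm_num
      _ = 81 * (N:ℝ) ^ ((2:ℝ)/9) := by
          rw [← Real.rpow_add' (by positivity) (by norm_num)]; norm_num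
      _ ≤ _ := by gcongr; norm_num

lemma KK_le (N : ℕ) (hN : 1 ≤ N) (α : ℝ) : ‖KK N α‖ ≤ 3 * N := by
  have hNR : (1:ℝ) ≤ N := by exact_mod_cast hN
  calc ‖KK N α‖ ≤ ∑ x ∈ Icc (-(N:ℤ)) N, ‖ee ((x:ℝ) ^ 2 * α)‖ := norm_sum_le _ _
    _ = 2 * N + 1 := by
        simp only [ee_norm, sum_const, card_IccN, nsmul_eq_mul]
        push_cast; ring
    _ ≤ _ := by linarith

/-- Large Weyl sums force good rational approximation. -/
lemma weyl : ∃ C : ℝ, 1 ≤ C ∧ ∀ (N : ℕ) (α η : ℝ), 1 ≤ N → 0 < η → C ≤ N * η ^ 4 →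
    η * N ≤ ‖KK N α‖ → ∃ q : ℕ, 1 ≤ q ∧ q * η ^ 2 ≤ C ∧ nn (q * α) * N ^ 2 * η ^ ((9:ℝ)/4) ≤ C := by
  refine ⟨10 ^ 10, by norm_num, fun N α η hN hη hbig hK => ?_⟩
  have hNR : (1:ℝ) ≤ N := by exact_mod_cast hN
  obtain ⟨g, hg, hKg⟩ := weyl_diff N α
  obtain ⟨q, hq, hgq⟩ := weyl_sum N hN (2 * α)
  obtain ⟨S, hS0, hS1, hS2, hS3⟩ := hgq g hg
  have h1 : (η * N) ^ 2 ≤ ‖KK N α‖ ^ 2 := by gcongr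
  have h2 : (10:ℝ) ^ 5 ≤ (N:ℝ) ^ ((8:ℝ)/9) * η ^ 2 := by
    have e1 : ((10:ℝ) ^ 5) ^ 2 ≤ ((N:ℝ) ^ ((1:ℝ)/2) * η ^ 2) ^ 2 := by
      rw [mul_pow, ← Real.sqrt_eq_rpow, Real.sq_sqrt (by positivity)]
      nlinarith
    have e2 := (pow_le_pow_iff_left₀ (by positivity) (by positivity) (by norm_num)).1 e1
    refine e2.trans ?_
    have e3 : (N:ℝ) ^ ((1:ℝ)/2) ≤ (N:ℝ) ^ ((8:ℝ)/9) :=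
      Real.rpow_le_rpow_of_exponent_le hNR (by norm_num)
    exact mul_le_mul_of_nonneg_right e3 (by positivity)
  have h3 : (N:ℝ) ^ ((10:ℝ)/9) * (N:ℝ) ^ ((8:ℝ)/9) = (N:ℝ) ^ 2 := by
    rw [← Real.rpow_add' (by positivity) (by norm_num)]; norm_num
  have h4 : (N:ℝ) ≤ (N:ℝ) ^ ((10:ℝ)/9) := by
    conv_lhs => rw [← Real.rpow_one (N:ℝ)]
    apply Real.rpow_le_rpow_of_exponent_le hNR; norm_num
  have h5 : (10:ℝ) ^ 5 * (N:ℝ) ^ ((10:ℝ)/9) ≤ η ^ 2 * N ^ 2 := by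
    rw [← h3]
    have : (0:ℝ) ≤ (N:ℝ) ^ ((10:ℝ)/9) := by positivity
    nlinarith
  have h6 : η ^ 2 * N ^ 2 / 4 ≤ S := by nlinarith
  have hN2 : (0:ℝ) < (N:ℝ) ^ 2 := by positivity
  refine ⟨2 * q, by omega, ?_, ?_⟩
  · have h7 : (η ^ 2 * N ^ 2 / 4) * q ≤ 6 * N ^ 2 := le_trans (by gcongr) hS2
    have h8 : η ^ 2 * q / 4 ≤ 6 := by
      apply le_of_mul_le_mul_right _ hN2
      linarith
    push_cast
    linarith
  · have e0 : ((2 * q : ℕ) : ℝ) * α = q * (2 * α) := by push_cast; ring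
    rw [e0]
    set X := nn (q * (2 * α)) with hX
    have hX0 : 0 ≤ X := nn_nonneg _
    have h7 : (η ^ 2 * N ^ 2 / 4) * X ^ ((8:ℝ)/9) ≤ 100 * (N:ℝ) ^ ((2:ℝ)/9) := le_trans (by gcongr) hS3
    have h8 : (N:ℝ) ^ ((16:ℝ)/9) * (N:ℝ) ^ ((2:ℝ)/9) = (N:ℝ) ^ 2 := by
      rw [← Real.rpow_add' (by positivity) (by norm_num)]; norm_num
    have h9 : X ^ ((8:ℝ)/9) * (N:ℝ) ^ ((16:ℝ)/9) * η ^ 2 ≤ 400 := by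
      apply le_of_mul_le_mul_right _ (by positivity : (0:ℝ) < (N:ℝ) ^ ((2:ℝ)/9))
      calc _ = (η ^ 2 * ((N:ℝ) ^ ((16:ℝ)/9) * (N:ℝ) ^ ((2:ℝ)/9)) / 4) * X ^ ((8:ℝ)/9) * 4 := by ring
        _ ≤ _ := by rw [h8]; linarith
    have h10 : X * N ^ 2 * η ^ ((9:ℝ)/4) = (X ^ ((8:ℝ)/9) * (N:ℝ) ^ ((16:ℝ)/9) * η ^ 2) ^ ((9:ℝ)/8) := by
      rw [Real.mul_rpow (by positivity) (by positivity), Real.mul_rpow (by positivity) (by positivity),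
        ← Real.rpow_mul hX0, ← Real.rpow_mul (by positivity), ← Real.rpow_natCast η, ← Real.rpow_mul hη.le]
      norm_num
    rw [h10]
    calc _ ≤ (400:ℝ) ^ ((9:ℝ)/8) := Real.rpow_le_rpow (by positivity) h9 (by norm_num)
      _ ≤ (400:ℝ) ^ (2:ℝ) := by apply Real.rpow_le_rpow_of_exponent_le <;> norm_num
      _ ≤ _ := by norm_num

/-- dyadic layer-cake inequality -/
lemma layer (a p : ℝ) (ha : 0 < a) (hap : a < p) : ∃ C : ℝ, 1 ≤ C ∧
    ∀ {ι : Type} (J : Finset ι) (s : ι → ℝ) (t D : ℝ), 0 < t → 0 ≤ D →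
    (∀ j ∈ J, s j ≤ 1) →
    (∀ η, t ≤ η → η ≤ 1 → (#{j ∈ J | η ≤ s j} : ℝ) ≤ D * η ^ (-a)) →
    ∑ j ∈ J with 2 * t ≤ s j, s j ^ p ≤ C * D := by
  set x : ℝ := (1/2 : ℝ) ^ (p - a) with hx
  have hx0 : 0 ≤ x := by positivity
  have hx1 : x < 1 := Real.rpow_lt_one (by norm_num) (by norm_num) (by linarith)
  have hsum : Summable fun n : ℕ => x ^ n := summable_geometric_of_lt_one hx0 hx1
  have hC2 : (1:ℝ) ≤ 2 ^ a := Real.one_le_rpow (by norm_num) ha.le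
  have hC1 : 1 ≤ ∑' n : ℕ, x ^ n := by
    have := hsum.sum_le_tsum {0} (fun i _ => by positivity)
    simpa using this
  refine ⟨2 ^ a * ∑' n : ℕ, x ^ n, by nlinarith, fun J s t D ht hD hs hcount => ?_⟩
  classical
  have hn : ∀ j, ∃ n : ℕ, (j ∈ J ∧ 2 * t ≤ s j) → ((1/2:ℝ) ^ (n + 1) < s j ∧ s j ≤ (1/2) ^ n) := by
    intro j
    by_cases h : j ∈ J ∧ 2 * t ≤ s j
    · obtain ⟨n, h1, h2⟩ := exists_nat_pow_near_of_lt_one (x := s j) (y := (1/2:ℝ)) (by linarith)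
        (hs j h.1) (by norm_num) (by norm_num)
      exact ⟨n, fun _ => ⟨h1, h2⟩⟩
    · exact ⟨0, fun h' => absurd h' h⟩
  choose n hn using hn
  set J' := {j ∈ J | 2 * t ≤ s j} with hJ'
  rw [← sum_fiberwise_of_maps_to (t := J'.image n) (g := n) (fun j hj => mem_image_of_mem _ hj)]
  have h1 : ∀ k ∈ J'.image n, ∑ j ∈ J' with n j = k, s j ^ p ≤ D * 2 ^ a * x ^ k := by
    intro k hk
    rw [mem_image] at hk
    obtain ⟨j0, hj0, rfl⟩ := hk
    set k := n j0
    have hj0' := hn j0 (mem_filter.1 hj0)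
    have htk : t ≤ (1/2:ℝ) ^ (k + 1) := by
      have := (mem_filter.1 hj0).2
      have h2 := hj0'.2
      rw [pow_succ]; linarith
    have hk1 : (1/2:ℝ) ^ (k + 1) ≤ 1 := pow_le_one₀ (by norm_num) (by norm_num)
    calc ∑ j ∈ J' with n j = k, s j ^ p ≤ ∑ j ∈ J' with n j = k, ((1/2:ℝ) ^ k) ^ p := by
          refine sum_le_sum fun j hj => ?_
          rw [mem_filter] at hj
          have h2 := hn j (mem_filter.1 hj.1)
          rw [hj.2] at h2
          apply Real.rpow_le_rpow _ h2.2 (by linarith)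
          exact le_trans (by positivity) h2.1.le
      _ = #{j ∈ J' | n j = k} * ((1/2:ℝ) ^ k) ^ p := by rw [sum_const, nsmul_eq_mul]
      _ ≤ #{j ∈ J | (1/2:ℝ) ^ (k + 1) ≤ s j} * ((1/2:ℝ) ^ k) ^ p := by
          gcongr
          intro j hj
          rw [mem_filter] at hj
          have h2 := hn j (mem_filter.1 hj.1)
          rw [hj.2] at h2
          exact mem_filter.2 ⟨(mem_filter.1 hj.1).1, h2.1.le⟩
      _ ≤ (D * ((1/2:ℝ) ^ (k + 1)) ^ (-a)) * ((1/2:ℝ) ^ k) ^ p := by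
          gcongr; exact hcount _ htk hk1
      _ = D * 2 ^ a * x ^ k := by
          rw [hx, ← Real.rpow_natCast, ← Real.rpow_natCast, ← Real.rpow_natCast, ← Real.rpow_mul (by norm_num),
            ← Real.rpow_mul (by norm_num), ← Real.rpow_mul (by norm_num), mul_assoc, mul_assoc, ← Real.rpow_add (by norm_num)]
          congr 1
          have : (2:ℝ) ^ a = (1/2) ^ (-a) := by
            rw [one_div, Real.inv_rpow (by norm_num), Real.rpow_neg (by norm_num), inv_inv]
          rw [this, ← Real.rpow_add (by norm_num)]
          congr 1
          push_cast; ring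
  refine (sum_le_sum h1).trans ?_
  rw [← mul_sum]
  have := hsum.sum_le_tsum (J'.image n) (fun i _ => by positivity)
  calc _ ≤ D * 2 ^ a * ∑' n : ℕ, x ^ n := by gcongr
    _ = _ := by ring

lemma sum_Icc_symm (L : ℕ) (H : ℤ → ℝ) :
    ∑ k ∈ Icc (-(L:ℤ)) L, H k = H 0 + ∑ m ∈ Icc 1 L, (H m + H (-m)) := by
  induction L with
  | zero => simp
  | succ L ih =>
    have h1 : Icc (-((L + 1 : ℕ):ℤ)) (L + 1 : ℕ) = insert ((L + 1 : ℕ):ℤ) (insert (-((L + 1 : ℕ):ℤ)) (Icc (-(L:ℤ)) L)) := by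
      ext x; simp only [mem_insert, mem_Icc]; push_cast; omega
    rw [h1, sum_insert, sum_insert, ih, sum_Icc_succ_top (by omega)]
    · ring
    · simp
    · simp only [mem_insert, mem_Icc]; push_cast; omega

/-- exponential sum over a set of points -/
def GG (M : ℕ) (E : Finset ℕ) (k : ℤ) : ℂ := ∑ j ∈ E, ee (k * ((j:ℝ) / M))

lemma GG_le (M : ℕ) (E : Finset ℕ) (k : ℤ) : ‖GG M E k‖ ≤ #E := by
  refine (norm_sum_le _ _).trans ?_
  simp [ee_norm]

lemma GG_neg (M : ℕ) (E : Finset ℕ) (k : ℤ) : ‖GG M E (-k)‖ = ‖GG M E k‖ := by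
  rw [← RCLike.norm_conj (GG M E k)]
  congr 1
  unfold GG
  rw [map_sum]
  refine sum_congr rfl fun j _ => ?_
  rw [ee_conj]; congr 1; push_cast; ring

lemma GG_bessel (M : ℕ) (hM : 0 < M) (E : Finset ℕ) (hE : E ⊆ range M) (K : ℕ) (hK : K < M) :
    ∑ k ∈ Icc 1 K, ‖GG M E k‖ ^ 2 ≤ M * #E := by
  have h := parseval M hM E (fun j => (j:ℤ)) (fun _ => 1) (by
    intro a ha b hb hab
    have ha := mem_range.1 (hE ha)
    have hb := mem_range.1 (hE hb)
    have := Int.eq_zero_of_abs_lt_dvd hab (by rw [abs_lt]; omega)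
    omega)
  simp only [one_mul, norm_one, one_pow, sum_const, nsmul_eq_mul, mul_one] at h
  rw [← h]
  have h2 : ∀ k : ℕ, ‖GG M E k‖ ^ 2 = ‖∑ a ∈ E, ee (((a:ℤ):ℝ) * ((k:ℝ) / M))‖ ^ 2 := by
    intro k
    unfold GG
    congr 2
    refine sum_congr rfl fun j _ => ?_
    congr 1; push_cast; ring
  simp_rw [h2]
  apply sum_le_sum_of_subset_of_nonneg
  · intro k hk; rw [mem_Icc] at hk; rw [mem_range]; omega
  · intro i _ _; positivity

lemma fejer_lower (L : ℕ) (θ w : ℝ) (hLw : L * w ≤ 1 / 8) (hθ : nn θ ≤ w) :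
    (L:ℝ) / 2 ≤ ‖∑ l ∈ range L, ee (l * θ)‖ := by
  set t := θ - round θ with ht
  have h1 : ∀ l : ℕ, ee (l * θ) = ee (l * t) := by
    intro l
    rw [ee_nat_mul, ee_nat_mul, ht, ee_sub_int]
  simp_rw [h1]
  refine le_trans ?_ (Complex.re_le_norm _)
  rw [Complex.re_sum]
  calc (L:ℝ) / 2 = ∑ l ∈ range L, (1/2:ℝ) := by simp; ring
    _ ≤ _ := by
      refine sum_le_sum fun l hl => ?_
      have hl : (l:ℝ) ≤ L := by exact_mod_cast (mem_range.1 hl).le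
      unfold ee
      rw [Complex.exp_ofReal_mul_I_re, ← Real.cos_abs]
      have h2 : |2 * Real.pi * (l * t)| ≤ Real.pi / 3 := by
        rw [abs_mul, abs_of_pos Real.two_pi_pos, abs_mul (l:ℝ), abs_of_nonneg (by positivity : (0:ℝ) ≤ l)]
        have : (l:ℝ) * |t| ≤ 1 / 8 := by
          calc (l:ℝ) * |t| ≤ L * w := by gcongr; exact hθ
            _ ≤ _ := hLw
        nlinarith [Real.pi_pos]
      rw [← Real.cos_pi_div_three]
      apply Real.cos_le_cos_of_nonneg_of_le_pi (abs_nonneg _) _ h2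
      linarith [Real.pi_pos]

lemma pairs_one (M : ℕ) (E : Finset ℕ) (L q : ℕ) (hL : 1 ≤ L) (w : ℝ) (hLw : L * w ≤ 1 / 8) :
    (#{p ∈ E ×ˢ E | nn (q * (((p.1:ℝ) - p.2) / M)) ≤ w} : ℝ) ≤
      4 / L * ((#E:ℝ) ^ 2 + 2 * ∑ m ∈ Icc 1 L, ‖GG M E (q * m : ℕ)‖ ^ 2) := by
  have hLR : (1:ℝ) ≤ L := by exact_mod_cast hL
  set Θ : ℕ × ℕ → ℝ := fun p => q * (((p.1:ℝ) - p.2) / M) with hΘ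
  set V : ℕ × ℕ → ℝ := fun p => ‖∑ l ∈ range L, ee (l * Θ p)‖ ^ 2 with hV
  have h1 : (#{p ∈ E ×ˢ E | nn (Θ p) ≤ w} : ℝ) ≤ 4 / L ^ 2 * ∑ p ∈ E ×ˢ E, V p := by
    rw [mul_sum]
    calc (#{p ∈ E ×ˢ E | nn (Θ p) ≤ w} : ℝ) = ∑ p ∈ E ×ˢ E with nn (Θ p) ≤ w, (1:ℝ) := by simp
      _ ≤ ∑ p ∈ E ×ˢ E with nn (Θ p) ≤ w, 4 / (L:ℝ) ^ 2 * V p := by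
          refine sum_le_sum fun p hp => ?_
          have := fejer_lower L (Θ p) w hLw (mem_filter.1 hp).2
          have h2 : ((L:ℝ) / 2) ^ 2 ≤ V p := by
            simp only [hV]; gcongr
          calc (1:ℝ) = 4 / (L:ℝ) ^ 2 * ((L:ℝ) / 2) ^ 2 := by field_simp; norm_num
            _ ≤ _ := by gcongr
      _ ≤ _ := by
          apply sum_le_sum_of_subset_of_nonneg (filter_subset _ _)
          intro p _ _; simp only [hV]; positivity
  have h2 : ∑ p ∈ E ×ˢ E, V p = ∑ l' ∈ range L, ∑ l ∈ range L, ‖GG M E (q * ((l:ℤ) - l'))‖ ^ 2 := by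
    have h0 : ∀ z : ℂ, ((‖z‖ ^ 2 : ℝ) : ℂ) = z * (starRingEnd ℂ) z := by
      intro z; rw [Complex.mul_conj, Complex.normSq_eq_norm_sq]
    apply Complex.ofReal_injective
    simp only [hV, Complex.ofReal_sum]
    simp_rw [h0, map_sum, sum_mul_sum, GG, map_sum, sum_mul_sum]
    rw [sum_comm]
    conv_rhs => rw [sum_comm]
    refine sum_congr rfl fun l _ => ?_
    rw [sum_comm]
    refine sum_congr rfl fun l' _ => ?_
    rw [sum_product]
    refine sum_congr rfl fun j _ => ?_
    refine sum_congr rfl fun j' _ => ?_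
    simp only [hΘ]
    rw [ee_conj, ee_conj, ← ee_add, ← ee_add]
    congr 1; push_cast; ring
  have h3 : ∀ l' ∈ range L, ∑ l ∈ range L, ‖GG M E (q * ((l:ℤ) - l'))‖ ^ 2 ≤
      (#E:ℝ) ^ 2 + 2 * ∑ m ∈ Icc 1 L, ‖GG M E (q * m : ℕ)‖ ^ 2 := by
    intro l' hl'
    rw [mem_range] at hl'
    let H : ℤ → ℝ := fun k => ‖GG M E (q * k)‖ ^ 2
    calc ∑ l ∈ range L, ‖GG M E (q * ((l:ℤ) - l'))‖ ^ 2 = ∑ k ∈ (range L).image (fun l : ℕ => (l:ℤ) - l'), H k := by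
          rw [sum_image (by intro i _ j _ h; simpa using h)]
      _ ≤ ∑ k ∈ Icc (-(L:ℤ)) L, H k := by
          apply sum_le_sum_of_subset_of_nonneg
          · intro k hk
            simp only [mem_image, mem_range] at hk
            obtain ⟨l, hl, rfl⟩ := hk
            rw [mem_Icc]; omega
          · intro i _ _; simp only [H]; positivity
      _ = H 0 + ∑ m ∈ Icc 1 L, (H m + H (-m)) := sum_Icc_symm L H
      _ ≤ _ := by
          apply add_le_add
          · simp only [H]
            gcongr
            exact GG_le _ _ _
          · rw [mul_sum]
            refine sum_le_sum fun m _ => le_of_eq ?_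
            simp only [H]
            rw [mul_neg, GG_neg]
            push_cast; ring
  rw [h2] at h1
  refine h1.trans ?_
  calc _ ≤ 4 / (L:ℝ) ^ 2 * ∑ l' ∈ range L, ((#E:ℝ) ^ 2 + 2 * ∑ m ∈ Icc 1 L, ‖GG M E (q * m : ℕ)‖ ^ 2) := by
        gcongr with l' hl'
        exact h3 l' hl'
    _ = _ := by
        rw [sum_const, card_range, nsmul_eq_mul]; field_simp

lemma pairs_all (B : ℕ) : ∃ C : ℝ, 1 ≤ C ∧ ∀ (M : ℕ) (E : Finset ℕ) (L Q : ℕ) (w Δ : ℝ), 0 < M →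
    E ⊆ range M → 1 ≤ L → 1 ≤ Q → L * w ≤ 1 / 8 → Q * L < M → 0 < Δ →
    ∑ q ∈ Icc 1 Q, (#{p ∈ E ×ˢ E | nn (q * (((p.1:ℝ) - p.2) / M)) ≤ w} : ℝ) ≤
      C * (Q * (#E:ℝ) ^ 2 / L + Δ * M * #E / L + (#E:ℝ) ^ 2 * (Q:ℝ) ^ 2 / Δ ^ B) := by
  obtain ⟨C, hC, hmom⟩ := dQ_moment (B + 1) (by omega)
  refine ⟨8 * C, by linarith, fun M E L Q w Δ hM hE hL hQ hLw hQL hΔ => ?_⟩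
  have hLR : (1:ℝ) ≤ L := by exact_mod_cast hL
  have h1 : ∑ q ∈ Icc 1 Q, ∑ m ∈ Icc 1 L, ‖GG M E (q * m : ℕ)‖ ^ 2 ≤
      ∑ k ∈ Icc 1 (Q * L), ‖GG M E k‖ ^ 2 * dQ Q k := by
    have h2 : ∀ k ∈ Icc 1 (Q * L), ‖GG M E k‖ ^ 2 * dQ Q k = ∑ q ∈ Icc 1 Q, if q ∣ k then ‖GG M E k‖ ^ 2 else 0 := by
      intro k _
      rw [← sum_filter, sum_const, nsmul_eq_mul, dQ, mul_comm]
    rw [sum_congr rfl h2, sum_comm (s := Icc 1 (Q * L))]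
    refine sum_le_sum fun q hq => ?_
    rw [mem_Icc] at hq
    rw [← sum_filter]
    calc _ = ∑ k ∈ (Icc 1 L).image (fun m => q * m), ‖GG M E k‖ ^ 2 := by
          rw [sum_image (by intro i _ j _ h; simpa [show q ≠ 0 by omega] using h)]
      _ ≤ _ := by
          apply sum_le_sum_of_subset_of_nonneg
          · intro k hk
            simp only [mem_image, mem_Icc] at hk
            obtain ⟨m, hm, rfl⟩ := hk
            rw [mem_filter, mem_Icc]
            exact ⟨⟨Nat.mul_pos hq.1 hm.1, Nat.mul_le_mul hq.2 hm.2⟩, dvd_mul_right _ _⟩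
          · intro i _ _; positivity
  have h2 : ∑ k ∈ Icc 1 (Q * L), ‖GG M E k‖ ^ 2 * dQ Q k ≤
      Δ * (M * #E) + (#E:ℝ) ^ 2 / Δ ^ B * (C * (Q * L : ℕ) * Q) := by
    calc _ ≤ ∑ k ∈ Icc 1 (Q * L), (Δ * ‖GG M E k‖ ^ 2 + (#E:ℝ) ^ 2 / Δ ^ B * (dQ Q k:ℝ) ^ (B + 1)) := by
          refine sum_le_sum fun k _ => ?_
          have hG := GG_le M E k
          rcases le_total (dQ Q k : ℝ) Δ with h | h
          · have : 0 ≤ (#E:ℝ) ^ 2 / Δ ^ B * (dQ Q k:ℝ) ^ (B + 1) := by positivity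
            nlinarith [sq_nonneg ‖GG M E k‖]
          · have h3 : (dQ Q k : ℝ) ≤ (dQ Q k:ℝ) ^ (B + 1) / Δ ^ B := by
              rw [le_div_iff₀ (by positivity), pow_succ, mul_comm]
              gcongr
            calc ‖GG M E k‖ ^ 2 * dQ Q k ≤ (#E:ℝ) ^ 2 * ((dQ Q k:ℝ) ^ (B + 1) / Δ ^ B) := by gcongr
              _ = (#E:ℝ) ^ 2 / Δ ^ B * (dQ Q k:ℝ) ^ (B + 1) := by ring
              _ ≤ _ := by
                have : 0 ≤ Δ * ‖GG M E k‖ ^ 2 := by positivity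
                linarith
      _ ≤ _ := by
          rw [sum_add_distrib, ← mul_sum, ← mul_sum]
          gcongr
          · exact GG_bessel M hM E hE _ hQL
          · exact hmom Q (Q * L) hQ
  calc _ ≤ ∑ q ∈ Icc 1 Q, 4 / (L:ℝ) * ((#E:ℝ) ^ 2 + 2 * ∑ m ∈ Icc 1 L, ‖GG M E (q * m : ℕ)‖ ^ 2) :=
        sum_le_sum fun q _ => pairs_one M E L q hL w hLw
    _ = 4 / (L:ℝ) * (Q * (#E:ℝ) ^ 2 + 2 * ∑ q ∈ Icc 1 Q, ∑ m ∈ Icc 1 L, ‖GG M E (q * m : ℕ)‖ ^ 2) := by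
        rw [← mul_sum, sum_add_distrib, ← mul_sum]; simp
    _ ≤ 4 / (L:ℝ) * (Q * (#E:ℝ) ^ 2 + 2 * (Δ * (M * #E) + (#E:ℝ) ^ 2 / Δ ^ B * (C * (Q * L : ℕ) * Q))) := by
        gcongr; exact h1.trans h2
    _ = 4 * (Q * (#E:ℝ) ^ 2 / L) + 8 * (Δ * M * #E / L) + 8 * C * ((#E:ℝ) ^ 2 * (Q:ℝ) ^ 2 / Δ ^ B) := by
        push_cast; field_simp; ring
    _ ≤ 8 * C * (Q * (#E:ℝ) ^ 2 / L) + 8 * C * (Δ * M * #E / L) + 8 * C * ((#E:ℝ) ^ 2 * (Q:ℝ) ^ 2 / Δ ^ B) := by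
        gcongr <;> linarith
    _ = _ := by ring

set_option maxHeartbeats 1000000 in
lemma pairs_level (B : ℕ) : ∃ C : ℝ, 1 ≤ C ∧ ∀ (N M : ℕ) (E : Finset ℕ) (η Δ : ℝ), 1 ≤ N →
    N ^ 2 < M → E ⊆ range M → 0 < η → η ≤ 1 → C ≤ N * η ^ 4 → 0 < Δ →
    (#{p ∈ E ×ˢ E | η * N ≤ ‖KK N (((p.1:ℝ) - p.2) / M)‖} : ℝ) ≤
      C * ((#E:ℝ) ^ 2 / (η ^ 2 * N ^ 2) + Δ * M * #E / N ^ 2 + (#E:ℝ) ^ 2 / (η ^ 4 * Δ ^ B))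
        * η ^ (-(9/4:ℝ)) := by
  obtain ⟨C0, hC0, hweyl⟩ := weyl
  obtain ⟨C1, hC1, hpairs⟩ := pairs_all B
  have hC01 : C0 ≤ 16 * C1 * C0 ^ 2 := by nlinarith [mul_nonneg (sub_nonneg.2 hC0) (sub_nonneg.2 hC1)]
  have h16 : 16 * C0 ≤ 16 * C1 * C0 ^ 2 := by
    have : C0 * 1 ≤ C0 * (C1 * C0) := by
      apply mul_le_mul_of_nonneg_left _ (by linarith)
      nlinarith
    nlinarith
  refine ⟨16 * C1 * C0 ^ 2, by linarith, fun N M E η Δ hN hNM hE hη hη1 hCN hΔ => ?_⟩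
  have hNR : (1:ℝ) ≤ N := by exact_mod_cast hN
  set u : ℝ := η ^ (9/4:ℝ) with hu
  have hu0 : 0 < u := by positivity
  have hu1 : u ≤ 1 := Real.rpow_le_one hη.le hη1 (by norm_num)
  have hu2 : u ≤ η ^ 2 := by
    rw [hu, ← Real.rpow_natCast]
    exact Real.rpow_le_rpow_of_exponent_ge hη hη1 (by norm_num)
  have hu4 : η ^ 4 ≤ u := by
    rw [hu, ← Real.rpow_natCast]
    exact Real.rpow_le_rpow_of_exponent_ge hη hη1 (by norm_num)
  have huinv : η ^ (-(9/4:ℝ)) = u⁻¹ := Real.rpow_neg hη.le _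
  rw [huinv]
  set w : ℝ := C0 / (u * N ^ 2) with hw
  have hw0 : 0 < w := by positivity
  have h8w : 8 * w ≤ 1 := by
    rw [hw, ← mul_div_assoc, div_le_one (by positivity)]
    have h1 : 16 * C0 ≤ N * u := by
      calc 16 * C0 ≤ N * η ^ 4 := by linarith
        _ ≤ _ := by gcongr
    nlinarith
  set x : ℝ := 1 / (8 * w) with hx
  have hx1 : 1 ≤ x := by rw [hx, le_div_iff₀ (by positivity)]; linarith
  set L : ℕ := ⌊x⌋₊ with hLdef
  have hL : 1 ≤ L := by rw [hLdef, Nat.one_le_floor_iff]; exact hx1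
  have hLR : (1:ℝ) ≤ L := by exact_mod_cast hL
  have hLx : (L:ℝ) ≤ x := Nat.floor_le (by linarith)
  have hxL : x < L + 1 := Nat.lt_floor_add_one x
  have hLw : L * w ≤ 1 / 8 := by
    calc L * w ≤ x * w := by gcongr
      _ = 1 / 8 := by rw [hx]; field_simp
  have hLinv : 1 / (L:ℝ) ≤ 16 * w := by
    rw [div_le_iff₀ (by positivity)]
    have : x * w = 1 / 8 := by rw [hx]; field_simp
    nlinarith
  set Q : ℕ := ⌊C0 / η ^ 2⌋₊ with hQdef
  have hη2 : η ^ 2 ≤ 1 := pow_le_one₀ hη.le hη1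
  have hQ : 1 ≤ Q := by
    rw [hQdef, Nat.one_le_floor_iff, le_div_iff₀ (by positivity)]; linarith
  have hQle : (Q:ℝ) ≤ C0 / η ^ 2 := Nat.floor_le (by positivity)
  have hNMR : (N:ℝ) ^ 2 < M := by exact_mod_cast hNM
  have hQL : Q * L < M := by
    have : (Q:ℝ) * L < M := by
      calc (Q:ℝ) * L ≤ C0 / η ^ 2 * x := by gcongr
        _ = N ^ 2 * (u / η ^ 2) / 8 := by rw [hx, hw]; field_simp
        _ ≤ N ^ 2 * 1 / 8 := by
          gcongr; rw [div_le_one (by positivity)]; exact hu2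
        _ < M := by nlinarith
    exact_mod_cast this
  have hM : 0 < M := by omega
  have key := hpairs M E L Q w Δ hM hE hL hQ hLw hQL hΔ
  have hsub : (#{p ∈ E ×ˢ E | η * N ≤ ‖KK N (((p.1:ℝ) - p.2) / M)‖} : ℝ) ≤
      ∑ q ∈ Icc 1 Q, (#{p ∈ E ×ˢ E | nn (q * (((p.1:ℝ) - p.2) / M)) ≤ w} : ℝ) := by
    have h1 : {p ∈ E ×ˢ E | η * N ≤ ‖KK N (((p.1:ℝ) - p.2) / M)‖} ⊆
        (Icc 1 Q).biUnion fun q => {p ∈ E ×ˢ E | nn (q * (((p.1:ℝ) - p.2) / M)) ≤ w} := by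
      intro p hp
      rw [mem_filter] at hp
      obtain ⟨q, hq1, hq2, hq3⟩ := hweyl N _ η hN hη (hC01.trans hCN) hp.2
      rw [mem_biUnion]
      refine ⟨q, ?_, ?_⟩
      · rw [mem_Icc]
        refine ⟨hq1, ?_⟩
        rw [hQdef]; apply Nat.le_floor
        rw [le_div_iff₀ (by positivity)]; exact hq2
      · rw [mem_filter]
        refine ⟨hp.1, ?_⟩
        rw [hw, le_div_iff₀ (by positivity)]
        linarith
    have h2 := (card_le_card h1).trans card_biUnion_le
    exact_mod_cast h2
  refine (hsub.trans key).trans ?_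
  set e : ℝ := (#E:ℝ) with he
  have he0 : 0 ≤ e := by positivity
  have hE1 : Q * e ^ 2 / L ≤ 16 * C0 ^ 2 * (e ^ 2 / (η ^ 2 * N ^ 2)) * u⁻¹ := by
    calc Q * e ^ 2 / L = Q * e ^ 2 * (1 / L) := by ring
      _ ≤ C0 / η ^ 2 * e ^ 2 * (16 * w) := by gcongr
      _ = _ := by rw [hw]; field_simp
  have hE2 : Δ * M * e / L ≤ 16 * C0 ^ 2 * (Δ * M * e / N ^ 2) * u⁻¹ := by
    calc Δ * M * e / L = Δ * M * e * (1 / L) := by ring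
      _ ≤ Δ * M * e * (16 * w) := by gcongr
      _ = 16 * C0 * (Δ * M * e / N ^ 2) * u⁻¹ := by rw [hw]; field_simp
      _ ≤ _ := by
        gcongr
        nlinarith
  have hΔB : 0 < Δ ^ B := by positivity
  clear_value u w x L Q e
  generalize Δ ^ B = d at *
  have hE3 : e ^ 2 * Q ^ 2 / d ≤ 16 * C0 ^ 2 * (e ^ 2 / (η ^ 4 * d)) * u⁻¹ := by
    calc e ^ 2 * Q ^ 2 / d ≤ e ^ 2 * (C0 / η ^ 2) ^ 2 / d := by gcongr
      _ = 1 * C0 ^ 2 * (e ^ 2 / (η ^ 4 * d)) * 1 := by field_simp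
      _ ≤ _ := by
        gcongr
        · norm_num
        · exact (one_le_inv₀ hu0).2 hu1
  calc _ ≤ C1 * (16 * C0 ^ 2 * (e ^ 2 / (η ^ 2 * N ^ 2)) * u⁻¹ + 16 * C0 ^ 2 * (Δ * M * e / N ^ 2) * u⁻¹
        + 16 * C0 ^ 2 * (e ^ 2 / (η ^ 4 * d)) * u⁻¹) := by gcongr
    _ = _ := by ring

def SS (N : ℕ) (f : ℤ → ℂ) (α : ℝ) : ℂ := ∑ x ∈ Icc (-(N:ℤ)) N, f x * ee ((x:ℝ) ^ 2 * α)

lemma duality (N M : ℕ) (f : ℤ → ℂ) (hf : ∑ x ∈ Icc (-(N:ℤ)) N, ‖f x‖ ^ 2 ≤ 1) (E : Finset ℕ) :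
    (∑ j ∈ E, ‖SS N f ((j:ℝ) / M)‖) ^ 2 ≤ ∑ p ∈ E ×ˢ E, ‖KK N (((p.1:ℝ) - p.2) / M)‖ := by
  have hu : ∀ z : ℂ, ∃ u : ℂ, ‖u‖ = 1 ∧ u * z = ‖z‖ := by
    intro z
    by_cases hz : z = 0
    · exact ⟨1, by simp, by simp [hz]⟩
    · refine ⟨(starRingEnd ℂ) z / ‖z‖, by simp [hz], ?_⟩
      have : (‖z‖:ℂ) ≠ 0 := by simpa using hz
      field_simp
      rw [mul_comm, Complex.mul_conj, Complex.normSq_eq_norm_sq]; push_cast; ring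
  choose U hU1 hU2 using hu
  set u : ℕ → ℂ := fun j => U (SS N f ((j:ℝ) / M)) with hudef
  set W : ℤ → ℂ := fun x => ∑ j ∈ E, u j * ee ((x:ℝ) ^ 2 * ((j:ℝ) / M)) with hW
  have h1 : ((∑ j ∈ E, ‖SS N f ((j:ℝ) / M)‖ : ℝ) : ℂ) = ∑ x ∈ Icc (-(N:ℤ)) N, f x * W x := by
    push_cast
    have : ∀ j ∈ E, (‖SS N f ((j:ℝ) / M)‖ : ℂ) = ∑ x ∈ Icc (-(N:ℤ)) N, f x * (u j * ee ((x:ℝ) ^ 2 * ((j:ℝ) / M))) := by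
      intro j _
      rw [← hU2, SS, mul_sum]
      refine sum_congr rfl fun x _ => ?_
      simp only [hudef, SS]; ring
    rw [sum_congr rfl this, sum_comm]
    simp only [hW, mul_sum]
  have h2 : ∑ j ∈ E, ‖SS N f ((j:ℝ) / M)‖ ≤ ∑ x ∈ Icc (-(N:ℤ)) N, ‖f x‖ * ‖W x‖ := by
    calc ∑ j ∈ E, ‖SS N f ((j:ℝ) / M)‖ = ‖((∑ j ∈ E, ‖SS N f ((j:ℝ) / M)‖ : ℝ) : ℂ)‖ := by
          rw [Complex.norm_real, Real.norm_of_nonneg (by positivity)]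
      _ = ‖∑ x ∈ Icc (-(N:ℤ)) N, f x * W x‖ := by rw [h1]
      _ ≤ ∑ x ∈ Icc (-(N:ℤ)) N, ‖f x * W x‖ := norm_sum_le _ _
      _ = _ := by simp
  have h3 : (∑ j ∈ E, ‖SS N f ((j:ℝ) / M)‖) ^ 2 ≤ ∑ x ∈ Icc (-(N:ℤ)) N, ‖W x‖ ^ 2 := by
    calc _ ≤ (∑ x ∈ Icc (-(N:ℤ)) N, ‖f x‖ * ‖W x‖) ^ 2 := by gcongr
      _ ≤ (∑ x ∈ Icc (-(N:ℤ)) N, ‖f x‖ ^ 2) * ∑ x ∈ Icc (-(N:ℤ)) N, ‖W x‖ ^ 2 := sum_mul_sq_le_sq_mul_sq _ _ _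
      _ ≤ 1 * ∑ x ∈ Icc (-(N:ℤ)) N, ‖W x‖ ^ 2 := by gcongr
      _ = _ := one_mul _
  refine h3.trans ?_
  have h4 : ((∑ x ∈ Icc (-(N:ℤ)) N, ‖W x‖ ^ 2 : ℝ) : ℂ) =
      ∑ p ∈ E ×ˢ E, u p.1 * (starRingEnd ℂ) (u p.2) * KK N (((p.1:ℝ) - p.2) / M) := by
    have h0 : ∀ z : ℂ, ((‖z‖ ^ 2 : ℝ) : ℂ) = z * (starRingEnd ℂ) z := by
      intro z; rw [Complex.mul_conj, Complex.normSq_eq_norm_sq]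
    simp only [Complex.ofReal_sum]
    simp_rw [h0, hW, map_sum, sum_mul_sum, KK, mul_sum]
    rw [sum_product, sum_comm]
    refine sum_congr rfl fun j _ => ?_
    rw [sum_comm]
    refine sum_congr rfl fun j' _ => sum_congr rfl fun x _ => ?_
    simp only
    rw [map_mul, ee_conj]
    have : ee ((x:ℝ) ^ 2 * (((j:ℝ) - j') / M)) = ee ((x:ℝ) ^ 2 * ((j:ℝ) / M)) * ee (-((x:ℝ) ^ 2 * ((j':ℝ) / M))) := by
      rw [← ee_add]; congr 1; ring
    rw [this]; ring
  calc ∑ x ∈ Icc (-(N:ℤ)) N, ‖W x‖ ^ 2 = ‖((∑ x ∈ Icc (-(N:ℤ)) N, ‖W x‖ ^ 2 : ℝ) : ℂ)‖ := by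
        rw [Complex.norm_real, Real.norm_of_nonneg (by positivity)]
    _ ≤ _ := by
      rw [h4]
      refine (norm_sum_le _ _).trans (sum_le_sum fun p _ => ?_)
      rw [norm_mul, norm_mul, RCLike.norm_conj, hU1, hU1]; simp

lemma level_arith (C3 e N M v Δ : ℝ) (hC3 : 1 ≤ C3) (he : 0 ≤ e) (hN : 1 ≤ N) (hM : 0 ≤ M)
    (hv : 0 < v) (hv1 : v ≤ 1) (hCN : 4 * C3 ≤ N * v ^ 64) (hΔ : Δ = 4 * C3 / v)
    (h : v ^ 38 * e ^ 2 ≤ C3 * (e ^ 2 / (v ^ 32 * N ^ 2) + Δ * M * e / N ^ 2 + e ^ 2 / (v ^ 64 * Δ ^ 104))) :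
    e * N ^ 2 * v ^ 39 ≤ 8 * C3 ^ 2 * M := by
  have h1 : C3 * (e ^ 2 / (v ^ 32 * N ^ 2)) ≤ v ^ 38 * e ^ 2 / 4 := by
    have : 4 * C3 ≤ N ^ 2 * v ^ 70 := by
      have hb : 1 ≤ N * v ^ 6 := by
        have : v ^ 64 ≤ v ^ 6 := pow_le_pow_of_le_one hv.le hv1 (by norm_num)
        nlinarith
      calc 4 * C3 ≤ N * v ^ 64 := hCN
        _ ≤ (N * v ^ 64) * (N * v ^ 6) := le_mul_of_one_le_right (by positivity) hb
        _ = _ := by ring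
    rw [← mul_div_assoc, div_le_iff₀ (by positivity)]
    calc C3 * e ^ 2 = (4 * C3) * (e ^ 2 / 4) := by ring
      _ ≤ (N ^ 2 * v ^ 70) * (e ^ 2 / 4) := by gcongr
      _ = _ := by ring
  have h3 : C3 * (e ^ 2 / (v ^ 64 * Δ ^ 104)) ≤ v ^ 38 * e ^ 2 / 4 := by
    have hD : 4 * C3 / v ^ 104 ≤ Δ ^ 104 := by
      rw [hΔ, div_pow]
      gcongr
      exact le_self_pow₀ (by linarith) (by norm_num)
    calc C3 * (e ^ 2 / (v ^ 64 * Δ ^ 104)) ≤ C3 * (e ^ 2 / (v ^ 64 * (4 * C3 / v ^ 104))) := by gcongr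
      _ = v ^ 40 * e ^ 2 / 4 := by field_simp
      _ ≤ _ := by
        have : v ^ 40 ≤ v ^ 38 := pow_le_pow_of_le_one hv.le hv1 (by norm_num)
        gcongr
  have h2 : v ^ 38 * e ^ 2 / 2 ≤ C3 * (Δ * M * e / N ^ 2) := by linarith
  rcases he.eq_or_lt with h0 | h0
  · rw [← h0]; simp; positivity
  have h4 : C3 * (Δ * M * e / N ^ 2) * (2 * v * N ^ 2 / e) = 8 * C3 ^ 2 * M := by
    rw [hΔ]; field_simp; ring
  rw [← h4]
  calc e * N ^ 2 * v ^ 39 = v ^ 38 * e ^ 2 / 2 * (2 * v * N ^ 2 / e) := by field_simp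
    _ ≤ _ := by gcongr

lemma level : ∃ C : ℝ, 1 ≤ C ∧ ∀ (N M : ℕ) (f : ℤ → ℂ) (v : ℝ), 1 ≤ N → N ^ 2 < M →
    ∑ x ∈ Icc (-(N:ℤ)) N, ‖f x‖ ^ 2 ≤ 1 → 0 < v → v ≤ 1 → C ≤ N * v ^ 64 →
    (#((range M).filter fun j : ℕ => v ^ 8 * √N ≤ ‖SS N f ((j:ℝ) / M)‖) : ℝ) * N ^ 2 * v ^ 39 ≤ C * M := by
  obtain ⟨Cp, hCp, hpl⟩ := pairs_level 104
  obtain ⟨Cl, hCl, hlay⟩ := layer (9/4) (19/8) (by norm_num) (by norm_num)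
  set C3 : ℝ := 216 * 20736 * (Cl * Cp) with hC3def
  have hCC : Cp ≤ Cl * Cp := le_mul_of_one_le_left (by linarith) hCl
  have hC3 : 1 ≤ C3 := by linarith
  have hC33 : C3 ≤ C3 ^ 2 := le_self_pow₀ hC3 (by norm_num)
  refine ⟨8 * C3 ^ 2, by linarith, fun N M f v hN hNM hf hv hv1 hCN => ?_⟩
  have hNR : (1:ℝ) ≤ N := by exact_mod_cast hN
  set E := ((range M).filter fun j : ℕ => v ^ 8 * √N ≤ ‖SS N f ((j:ℝ) / M)‖) with hE
  have hv64 : (0:ℝ) < v ^ 64 := by positivity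
  have hΔ0 : 0 < 4 * C3 / v := by positivity
  refine level_arith C3 (#E) N M v (4 * C3 / v) hC3 (by positivity) hNR (by positivity) hv hv1 (by linarith) rfl ?_
  generalize 4 * C3 / v = Δ at *
  set e : ℝ := (#E:ℝ) with he
  set t : ℝ := v ^ 16 / 12 with ht
  have ht0 : 0 < t := by positivity
  set s : ℕ × ℕ → ℝ := fun p => ‖KK N (((p.1:ℝ) - p.2) / M)‖ / (3 * N) with hs
  have hs0 : ∀ p, 0 ≤ s p := fun p => by simp only [hs]; positivity
  set D : ℝ := Cp * (e ^ 2 / (t ^ 2 * N ^ 2) + Δ * M * e / N ^ 2 + e ^ 2 / (t ^ 4 * Δ ^ 104)) with hD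
  have hD0 : 0 ≤ D := by positivity
  have hEM : E ⊆ range M := filter_subset _ _
  have hL := hlay (E ×ˢ E) s t D ht0 hD0 (by
      intro p _
      simp only [hs]
      rw [div_le_one (by positivity)]
      exact KK_le N hN _) (by
      intro η htη hη1
      have hη : 0 < η := ht0.trans_le htη
      have hc : Cp ≤ N * η ^ 4 := by
        calc Cp ≤ N * t ^ 4 := by
              have : N * t ^ 4 = N * v ^ 64 / 20736 := by rw [ht]; ring
              rw [this]; linarith
          _ ≤ _ := by gcongr
      have h1 := hpl N M E η Δ hN hNM hEM hη hη1 hc hΔ0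
      calc (#{p ∈ E ×ˢ E | η ≤ s p} : ℝ) ≤ (#{p ∈ E ×ˢ E | η * N ≤ ‖KK N (((p.1:ℝ) - p.2) / M)‖} : ℝ) := by
            apply Nat.cast_le.2
            apply card_le_card
            intro p hp
            rw [mem_filter] at hp ⊢
            refine ⟨hp.1, ?_⟩
            have h2 := hp.2
            simp only [hs] at h2
            rw [le_div_iff₀ (by positivity)] at h2
            have : 0 ≤ η * N := by positivity
            linarith
        _ ≤ _ := h1
        _ ≤ D * η ^ (-(9/4:ℝ)) := by
            rw [hD]
            gcongr)
  have hdual := duality N M f hf E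
  have hd2 : v ^ 16 * e ^ 2 ≤ 3 * ∑ p ∈ E ×ˢ E, s p := by
    have h1 : v ^ 8 * √N * e ≤ ∑ j ∈ E, ‖SS N f ((j:ℝ) / M)‖ := by
      calc v ^ 8 * √N * e = ∑ j ∈ E, v ^ 8 * √N := by simp [he]; ring
        _ ≤ _ := sum_le_sum fun j hj => (mem_filter.1 hj).2
    have h2 : (v ^ 8 * √N * e) ^ 2 ≤ ∑ p ∈ E ×ˢ E, ‖KK N (((p.1:ℝ) - p.2) / M)‖ :=
      le_trans (by gcongr) hdual
    have h3 : ∑ p ∈ E ×ˢ E, s p = (∑ p ∈ E ×ˢ E, ‖KK N (((p.1:ℝ) - p.2) / M)‖) / (3 * N) := by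
      rw [sum_div]
    rw [h3, mul_pow, mul_pow, Real.sq_sqrt (by positivity)] at *
    calc v ^ 16 * e ^ 2 = 3 * (((v ^ 8) ^ 2 * N * e ^ 2) / (3 * N)) := by field_simp
      _ ≤ _ := by gcongr
  have hsplit : ∑ p ∈ E ×ˢ E, s p = ∑ p ∈ E ×ˢ E with 2 * t ≤ s p, s p + ∑ p ∈ E ×ˢ E with ¬ 2 * t ≤ s p, s p :=
    (sum_filter_add_sum_filter_not _ _ _).symm
  have hlow : ∑ p ∈ E ×ˢ E with ¬ 2 * t ≤ s p, s p ≤ e ^ 2 * (2 * t) := by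
    calc _ ≤ ∑ p ∈ E ×ˢ E with ¬ 2 * t ≤ s p, 2 * t := sum_le_sum fun p hp => (not_le.1 (mem_filter.1 hp).2).le
      _ ≤ ∑ p ∈ E ×ˢ E, 2 * t := sum_le_sum_of_subset_of_nonneg (filter_subset _ _) fun _ _ _ => by positivity
      _ = _ := by rw [sum_const, card_product, nsmul_eq_mul, Nat.cast_mul, he]; ring
  have h6 : v ^ 22 / 36 ≤ (2 * t) ^ (11/8:ℝ) := by
    have : 2 * t = v ^ 16 / 6 := by rw [ht]; ring
    rw [this, Real.div_rpow (by positivity) (by norm_num)]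
    have h1 : (v ^ 16) ^ (11/8:ℝ) = v ^ 22 := by
      rw [← Real.rpow_natCast, ← Real.rpow_mul hv.le, ← Real.rpow_natCast]; norm_num
    have h2 : (6:ℝ) ^ (11/8:ℝ) ≤ 36 := by
      calc (6:ℝ) ^ (11/8:ℝ) ≤ 6 ^ (2:ℝ) := Real.rpow_le_rpow_of_exponent_le (by norm_num) (by norm_num)
        _ = 36 := by norm_num
    rw [h1]
    gcongr
  have hhigh : v ^ 22 / 36 * ∑ p ∈ E ×ˢ E with 2 * t ≤ s p, s p ≤ Cl * D := by
    refine le_trans ?_ hL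
    rw [mul_sum]
    refine sum_le_sum fun p hp => ?_
    have hp2 := (mem_filter.1 hp).2
    have hsp : 0 < s p := lt_of_lt_of_le (by positivity) hp2
    calc v ^ 22 / 36 * s p ≤ (s p) ^ (11/8:ℝ) * s p := by
          gcongr
          exact h6.trans (Real.rpow_le_rpow (by positivity) hp2 (by norm_num))
      _ = s p ^ (19/8:ℝ) := by
          rw [← Real.rpow_add_one hsp.ne']; norm_num
  have h7 : v ^ 16 * e ^ 2 / 6 ≤ ∑ p ∈ E ×ˢ E with 2 * t ≤ s p, s p := by
    have : e ^ 2 * (2 * t) = v ^ 16 * e ^ 2 / 6 := by rw [ht]; ring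
    linarith
  have h8 : v ^ 38 * e ^ 2 ≤ 216 * (Cl * D) := by
    calc v ^ 38 * e ^ 2 = 216 * (v ^ 22 / 36 * (v ^ 16 * e ^ 2 / 6)) := by ring
      _ ≤ 216 * (v ^ 22 / 36 * ∑ p ∈ E ×ˢ E with 2 * t ≤ s p, s p) := by gcongr
      _ ≤ _ := by gcongr
  refine h8.trans ?_
  have hA : e ^ 2 / (t ^ 2 * N ^ 2) ≤ 20736 * (e ^ 2 / (v ^ 32 * N ^ 2)) := by
    have : e ^ 2 / (t ^ 2 * N ^ 2) = 144 * (e ^ 2 / (v ^ 32 * N ^ 2)) := by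
      rw [ht]; field_simp; norm_num
    rw [this]
    gcongr
    norm_num
  have hB : Δ * M * e / N ^ 2 ≤ 20736 * (Δ * M * e / N ^ 2) := by
    have : 0 ≤ Δ * M * e / N ^ 2 := by positivity
    linarith
  have hd : 0 < Δ ^ 104 := by positivity
  have hC : e ^ 2 / (t ^ 4 * Δ ^ 104) = 20736 * (e ^ 2 / (v ^ 64 * Δ ^ 104)) := by
    generalize Δ ^ 104 = d at *
    rw [ht]; field_simp; norm_num
  calc 216 * (Cl * D) ≤ 216 * (Cl * (Cp * (20736 * (e ^ 2 / (v ^ 32 * N ^ 2)) + 20736 * (Δ * M * e / N ^ 2) + 20736 * (e ^ 2 / (v ^ 64 * Δ ^ 104))))) := by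
        rw [hD, hC]; gcongr
    _ = _ := by rw [hC3def]; ring

lemma rep_card (N : ℕ) (m : ℤ) (hm : m ≠ 0) :
    #{p ∈ Icc (-(N:ℤ)) N ×ˢ Icc (-(N:ℤ)) N | p.1 ^ 2 - p.2 ^ 2 = m} ≤ 2 * #m.natAbs.divisors := by
  have : #(m.natAbs.divisors ×ˢ (univ : Finset Bool)) = 2 * #m.natAbs.divisors := by
    rw [card_product]; simp [mul_comm]
  rw [← this]
  apply card_le_card_of_injOn (fun p => ((p.1 - p.2).natAbs, decide (0 ≤ p.1 - p.2)))
  · intro p hp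
    have hp := (mem_filter.1 hp).2
    simp only [coe_product, Set.mem_prod, mem_coe, Nat.mem_divisors, mem_univ, and_true]
    refine ⟨?_, by omega⟩
    rw [Int.natAbs_dvd_natAbs]
    exact ⟨p.1 + p.2, by rw [← hp]; ring⟩
  · intro p hp q hq hpq
    have hp := (mem_filter.1 hp).2
    have hq := (mem_filter.1 hq).2
    simp only [Prod.mk.injEq, decide_eq_decide] at hpq
    have h1 : p.1 - p.2 = q.1 - q.2 := by omega
    have h0 : p.1 - p.2 ≠ 0 := by
      intro h; apply hm; rw [← hp]; linear_combination (p.1 + p.2) * h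
    have h2 : p.1 + p.2 = q.1 + q.2 := by
      apply mul_left_cancel₀ h0
      linear_combination hp - hq - (q.1 + q.2) * h1
    ext <;> omega

lemma c_zero (N : ℕ) (f : ℤ → ℂ) (hf : ∑ x ∈ Icc (-(N:ℤ)) N, ‖f x‖ ^ 2 ≤ 1) :
    ∑ p ∈ Icc (-(N:ℤ)) N ×ˢ Icc (-(N:ℤ)) N with p.1 ^ 2 - p.2 ^ 2 = 0, ‖f p.1‖ * ‖f p.2‖ ≤ 2 := by
  set I := Icc (-(N:ℤ)) N with hI
  have hsub : {p ∈ I ×ˢ I | p.1 ^ 2 - p.2 ^ 2 = 0} ⊆ I.image (fun x => (x, x)) ∪ I.image (fun x => (x, -x)) := by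
    intro p hp
    rw [mem_filter, mem_product] at hp
    have h : p.2 = p.1 ∨ p.2 = -p.1 := by
      apply sq_eq_sq_iff_eq_or_eq_neg.1; linarith [hp.2]
    rw [mem_union, mem_image, mem_image]
    rcases h with h | h
    · left; exact ⟨p.1, hp.1.1, by ext <;> simp [h]⟩
    · right; exact ⟨p.1, hp.1.1, by ext <;> simp [h]⟩
  have hneg : ∑ x ∈ I, ‖f (-x)‖ ^ 2 = ∑ x ∈ I, ‖f x‖ ^ 2 := by
    apply sum_nbij' (fun x => -x) (fun x => -x) <;> intro x hx <;> simp only [hI, mem_Icc, neg_neg] at * <;> omega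
  calc _ ≤ ∑ p ∈ I.image (fun x => (x, x)) ∪ I.image (fun x => (x, -x)), ‖f p.1‖ * ‖f p.2‖ :=
        sum_le_sum_of_subset_of_nonneg hsub fun _ _ _ => by positivity
    _ ≤ ∑ p ∈ I.image (fun x => (x, x)), ‖f p.1‖ * ‖f p.2‖ + ∑ p ∈ I.image (fun x => (x, -x)), ‖f p.1‖ * ‖f p.2‖ := by
        rw [← sum_union_inter]
        have : 0 ≤ ∑ p ∈ I.image (fun x => (x, x)) ∩ I.image (fun x => (x, -x)), ‖f p.1‖ * ‖f p.2‖ := by positivity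
        linarith
    _ = ∑ x ∈ I, ‖f x‖ ^ 2 + ∑ x ∈ I, ‖f x‖ * ‖f (-x)‖ := by
        rw [sum_image (by intro a _ b _ h; exact (Prod.ext_iff.1 h).1), sum_image (by intro a _ b _ h; exact (Prod.ext_iff.1 h).1)]
        simp only [sq]
    _ ≤ ∑ x ∈ I, ‖f x‖ ^ 2 + ∑ x ∈ I, (‖f x‖ ^ 2 + ‖f (-x)‖ ^ 2) / 2 := by
        gcongr with x hx
        nlinarith [sq_nonneg (‖f x‖ - ‖f (-x)‖)]
    _ ≤ _ := by
        rw [← sum_div, sum_add_distrib, hneg]; linarith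

lemma SS_le (N : ℕ) (hN : 1 ≤ N) (f : ℤ → ℂ) (hf : ∑ x ∈ Icc (-(N:ℤ)) N, ‖f x‖ ^ 2 ≤ 1) (α : ℝ) :
    ‖SS N f α‖ ≤ 2 * √N := by
  have hNR : (1:ℝ) ≤ N := by exact_mod_cast hN
  have h1 : ‖SS N f α‖ ≤ ∑ x ∈ Icc (-(N:ℤ)) N, ‖f x‖ * 1 := by
    refine (norm_sum_le _ _).trans (le_of_eq (sum_congr rfl fun x _ => ?_))
    rw [norm_mul, ee_norm]
  have h2 : ‖SS N f α‖ ^ 2 ≤ (2 * √N) ^ 2 := by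
    calc ‖SS N f α‖ ^ 2 ≤ (∑ x ∈ Icc (-(N:ℤ)) N, ‖f x‖ * 1) ^ 2 := by gcongr
      _ ≤ (∑ x ∈ Icc (-(N:ℤ)) N, ‖f x‖ ^ 2) * ∑ x ∈ Icc (-(N:ℤ)) N, (1:ℝ) ^ 2 := sum_mul_sq_le_sq_mul_sq _ _ _
      _ ≤ 1 * (2 * N + 1) := by
          gcongr
          simp [Int.card_Icc]
          rw [← Int.cast_natCast, Int.toNat_of_nonneg (by omega)]; push_cast; linarith
      _ ≤ _ := by rw [mul_pow, Real.sq_sqrt (by positivity)]; linarith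
  exact (pow_le_pow_iff_left₀ (norm_nonneg _) (by positivity) (by norm_num)).1 h2

lemma L4 : ∃ C : ℝ, 1 ≤ C ∧ ∀ (N M : ℕ) (f : ℤ → ℂ), 1 ≤ N → 2 * N ^ 2 < M →
    ∑ x ∈ Icc (-(N:ℤ)) N, ‖f x‖ ^ 2 ≤ 1 →
    ∑ j ∈ range M, ‖SS N f ((j:ℝ) / M)‖ ^ 4 ≤ C * M * (N:ℝ) ^ (1/8:ℝ) := by
  obtain ⟨C, hC, hdiv⟩ := divisor_bound (1/16) (by norm_num)
  refine ⟨4 + 2 * C, by linarith, fun N M f hN hNM hf => ?_⟩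
  have hNR : (1:ℝ) ≤ N := by exact_mod_cast hN
  set I := Icc (-(N:ℤ)) N with hI
  set A : Finset ℤ := Icc (-((N:ℤ) ^ 2)) ((N:ℤ) ^ 2) with hA
  set R : ℤ → Finset (ℤ × ℤ) := fun m => {p ∈ I ×ˢ I | p.1 ^ 2 - p.2 ^ 2 = m} with hR
  set c : ℤ → ℂ := fun m => ∑ p ∈ R m, f p.1 * (starRingEnd ℂ) (f p.2) with hc
  have hmap : ∀ p ∈ I ×ˢ I, p.1 ^ 2 - p.2 ^ 2 ∈ A := by
    intro p hp
    rw [mem_product, hI, mem_Icc, mem_Icc] at hp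
    rw [hA, mem_Icc]
    constructor <;> nlinarith
  have h1 : ∀ j : ℕ, ‖SS N f ((j:ℝ) / M)‖ ^ 4 = ‖∑ m ∈ A, c m * ee (m * ((j:ℝ) / M))‖ ^ 2 := by
    intro j
    set α := (j:ℝ) / M
    have : ∑ m ∈ A, c m * ee (m * α) = SS N f α * (starRingEnd ℂ) (SS N f α) := by
      rw [SS, map_sum, sum_mul_sum, ← sum_product', ← sum_fiberwise_of_maps_to hmap]
      refine sum_congr rfl fun m _ => ?_
      simp only [hc, sum_mul]
      refine sum_congr rfl fun p hp => ?_
      have hp := (mem_filter.1 hp).2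
      rw [map_mul, ee_conj, ← hp]
      have : ee (((p.1 ^ 2 - p.2 ^ 2 : ℤ):ℝ) * α) = ee ((p.1:ℝ) ^ 2 * α) * ee (-((p.2:ℝ) ^ 2 * α)) := by
        rw [← ee_add]; congr 1; push_cast; ring
      rw [this]; ring
    rw [this, norm_mul, RCLike.norm_conj]; ring
  simp_rw [h1]
  rw [parseval M (by omega) A (fun m => m) c (by
    intro a ha b hb hab
    rw [hA, mem_Icc] at ha hb
    have := Int.eq_zero_of_abs_lt_dvd hab (by
      rw [abs_lt]; zify at hNM; constructor <;> linarith)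
    omega)]
  have hnf : ∀ m, ‖c m‖ ≤ ∑ p ∈ R m, ‖f p.1‖ * ‖f p.2‖ := by
    intro m
    refine (norm_sum_le _ _).trans (le_of_eq (sum_congr rfl fun p _ => ?_))
    rw [norm_mul, RCLike.norm_conj]
  have hnn1 : (1:ℝ) ≤ (N:ℝ) ^ (1/8:ℝ) := Real.one_le_rpow hNR (by norm_num)
  have hcm : ∀ m ∈ A, ‖c m‖ ^ 2 ≤ (if m = 0 then 4 else 0) + 2 * C * (N:ℝ) ^ (1/8:ℝ) * ∑ p ∈ R m, (‖f p.1‖ * ‖f p.2‖) ^ 2 := by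
    intro m hm
    have hpos : 0 ≤ ∑ p ∈ R m, (‖f p.1‖ * ‖f p.2‖) ^ 2 := by positivity
    split_ifs with h0
    · subst h0
      have h2 : ‖c 0‖ ≤ 2 := (hnf 0).trans (c_zero N f hf)
      have : 0 ≤ 2 * C * (N:ℝ) ^ (1/8:ℝ) * ∑ p ∈ R 0, (‖f p.1‖ * ‖f p.2‖) ^ 2 := by positivity
      nlinarith [norm_nonneg (c 0)]
    · rw [zero_add]
      have hcard : (#(R m):ℝ) ≤ 2 * C * (N:ℝ) ^ (1/8:ℝ) := by
        have h3 : (#(R m):ℝ) ≤ 2 * (#m.natAbs.divisors:ℝ) := by exact_mod_cast rep_card N m h0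
        have h4 := hdiv m.natAbs (by omega)
        have h5 : ((m.natAbs:ℕ):ℝ) ^ (1/16:ℝ) ≤ (N:ℝ) ^ (1/8:ℝ) := by
          have h6 : (m.natAbs:ℝ) ≤ (N:ℝ) ^ 2 := by
            rw [hA, mem_Icc] at hm
            have : m.natAbs ≤ N ^ 2 := by zify; rw [abs_le]; exact hm
            exact_mod_cast this
          calc ((m.natAbs:ℕ):ℝ) ^ (1/16:ℝ) ≤ ((N:ℝ) ^ 2) ^ (1/16:ℝ) := Real.rpow_le_rpow (by positivity) h6 (by norm_num)
            _ = _ := by rw [← Real.rpow_natCast, ← Real.rpow_mul (by positivity)]; norm_num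
        calc (#(R m):ℝ) ≤ 2 * (C * (m.natAbs:ℝ) ^ (1/16:ℝ)) := by linarith
          _ ≤ 2 * (C * (N:ℝ) ^ (1/8:ℝ)) := by gcongr
          _ = _ := by ring
      calc ‖c m‖ ^ 2 ≤ (∑ p ∈ R m, ‖f p.1‖ * ‖f p.2‖) ^ 2 := by gcongr; exact hnf m
        _ ≤ #(R m) * ∑ p ∈ R m, (‖f p.1‖ * ‖f p.2‖) ^ 2 := sq_sum_le_card_mul_sum_sq
        _ ≤ _ := by gcongr
  have hsum : ∑ m ∈ A, ∑ p ∈ R m, (‖f p.1‖ * ‖f p.2‖) ^ 2 ≤ 1 := by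
    simp only [hR]
    rw [sum_fiberwise_of_maps_to hmap (fun p => (‖f p.1‖ * ‖f p.2‖) ^ 2)]
    simp_rw [mul_pow]
    rw [sum_product]
    simp only
    rw [← sum_mul_sum]
    have : 0 ≤ ∑ x ∈ I, ‖f x‖ ^ 2 := by positivity
    nlinarith
  have hfin : ∑ m ∈ A, ‖c m‖ ^ 2 ≤ 4 + 2 * C * (N:ℝ) ^ (1/8:ℝ) := by
    refine (sum_le_sum hcm).trans ?_
    rw [sum_add_distrib, ← mul_sum]
    apply add_le_add
    · rw [sum_ite_eq']; split_ifs <;> norm_num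
    · exact mul_le_of_le_one_right (by positivity) hsum
  calc (M:ℝ) * ∑ m ∈ A, ‖c m‖ ^ 2 ≤ M * ((4 + 2 * C) * (N:ℝ) ^ (1/8:ℝ)) := by
        gcongr; linarith
    _ = _ := by ring

lemma L5 : ∃ C : ℝ, 1 ≤ C ∧ ∀ (N M : ℕ) (f : ℤ → ℂ), 1 ≤ N → 2 * N ^ 2 < M →
    ∑ x ∈ Icc (-(N:ℤ)) N, ‖f x‖ ^ 2 ≤ 1 →
    ∑ j ∈ range M, ‖SS N f ((j:ℝ) / M)‖ ^ 5 ≤ C * M * √N := by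
  obtain ⟨C4, hC4, h4⟩ := L4
  obtain ⟨Cv, hCv, hlev⟩ := level
  obtain ⟨Cl, hCl, hlay⟩ := layer (39/8) 5 (by norm_num) (by norm_num)
  have hcc : 1 ≤ Cl * Cv := one_le_mul_of_one_le_of_one_le hCl hCv
  refine ⟨32 * (Cl * Cv) + 4 * Cv ^ (1/8:ℝ) * C4, by
    have : 0 ≤ 4 * Cv ^ (1/8:ℝ) * C4 := by positivity
    linarith, fun N M f hN hNM hf => ?_⟩
  have hNR : (1:ℝ) ≤ N := by exact_mod_cast hN
  have hsq : 0 < √(N:ℝ) := by positivity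
  set S : ℕ → ℝ := fun j => ‖SS N f ((j:ℝ) / M)‖ with hS
  set s : ℕ → ℝ := fun j => S j / (2 * √N) with hs
  set t : ℝ := (Cv / N) ^ (1/8:ℝ) with ht
  have ht0 : 0 < t := by positivity
  have ht8 : t ^ 8 = Cv / N := by
    rw [ht, ← Real.rpow_natCast, ← Real.rpow_mul (by positivity)]; norm_num
  set D : ℝ := Cv * M / N ^ 2 with hD
  have hSs : ∀ j, S j = 2 * √N * s j := by intro j; simp only [hs]; field_simp
  have hL := hlay (range M) s t D ht0 (by positivity) (by
      intro j _
      simp only [hs]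
      rw [div_le_one (by positivity)]
      exact SS_le N hN f hf _) (by
      intro η htη hη1
      have hη : 0 < η := ht0.trans_le htη
      set v : ℝ := η ^ (1/8:ℝ) with hv
      have hv0 : 0 < v := by positivity
      have hv8 : v ^ 8 = η := by
        rw [hv, ← Real.rpow_natCast, ← Real.rpow_mul (by positivity)]; norm_num
      have hv39 : v ^ 39 = η ^ (39/8:ℝ) := by
        rw [hv, ← Real.rpow_natCast, ← Real.rpow_mul (by positivity)]; norm_num
      have h1 := hlev N M f v hN (by omega) hf hv0 (Real.rpow_le_one hη.le hη1 (by norm_num)) (by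
        have : v ^ 64 = η ^ 8 := by rw [← hv8]; ring
        rw [this]
        calc Cv = N * t ^ 8 := by rw [ht8]; field_simp
          _ ≤ _ := by gcongr)
      rw [Real.rpow_neg hη.le, ← hv39, hD]
      have h2 : (#{j ∈ range M | η ≤ s j} : ℝ) ≤ (#((range M).filter fun j : ℕ => v ^ 8 * √N ≤ ‖SS N f ((j:ℝ) / M)‖):ℝ) := by
        apply Nat.cast_le.2
        apply card_le_card
        intro j hj
        rw [mem_filter] at hj ⊢
        refine ⟨hj.1, ?_⟩
        have h3 : S j = 2 * √N * s j := hSs j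
        have h4 : η * √N ≤ s j * √N := by gcongr; exact hj.2
        have h5 : 0 ≤ η * √N := by positivity
        rw [hv8]
        change η * √N ≤ S j
        rw [h3]; linarith
      refine h2.trans ?_
      rw [← div_eq_mul_inv, le_div_iff₀ (by positivity), le_div_iff₀ (by positivity)]
      linarith)
  have hS0 : ∀ j, 0 ≤ S j := fun j => norm_nonneg _
  rw [← sum_filter_add_sum_filter_not (range M) (fun j => 2 * t ≤ s j)]
  have hA : ∑ j ∈ range M with 2 * t ≤ s j, S j ^ 5 ≤ 32 * (Cl * Cv) * (M * √N) := by
    have hN2 : (√N) ^ 2 = (N:ℝ) := Real.sq_sqrt (by positivity)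
    calc ∑ j ∈ range M with 2 * t ≤ s j, S j ^ 5 = (2 * √N) ^ 5 * ∑ j ∈ range M with 2 * t ≤ s j, s j ^ (5:ℝ) := by
          rw [mul_sum]
          refine sum_congr rfl fun j _ => ?_
          rw [hSs, mul_pow]; norm_cast
      _ ≤ (2 * √N) ^ 5 * (Cl * D) := by gcongr
      _ = 32 * (Cl * Cv) * (M * √N) * ((√N) ^ 2) ^ 2 / N ^ 2 := by rw [hD]; ring
      _ = _ := by rw [hN2]; field_simp
  have hB : ∑ j ∈ range M with ¬ 2 * t ≤ s j, S j ^ 5 ≤ 4 * Cv ^ (1/8:ℝ) * C4 * (M * √N) := by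
    have key : t * √N * (N:ℝ) ^ (1/8:ℝ) = Cv ^ (1/8:ℝ) * √N := by
      rw [ht, Real.div_rpow (by positivity) (by positivity)]
      have : 0 < (N:ℝ) ^ (1/8:ℝ) := by positivity
      field_simp
    calc ∑ j ∈ range M with ¬ 2 * t ≤ s j, S j ^ 5 ≤ ∑ j ∈ range M with ¬ 2 * t ≤ s j, 4 * t * √N * S j ^ 4 := by
          refine sum_le_sum fun j hj => ?_
          have h1 := (not_le.1 (mem_filter.1 hj).2).le
          have h2 : S j ≤ 4 * t * √N := by
            rw [hSs]
            calc 2 * √N * s j ≤ 2 * √N * (2 * t) := by gcongr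
              _ = _ := by ring
          calc S j ^ 5 = S j * S j ^ 4 := by ring
            _ ≤ _ := by gcongr
      _ ≤ ∑ j ∈ range M, 4 * t * √N * S j ^ 4 := 
          sum_le_sum_of_subset_of_nonneg (filter_subset _ _) fun j _ _ => by positivity
      _ = 4 * t * √N * ∑ j ∈ range M, S j ^ 4 := by rw [mul_sum]
      _ ≤ 4 * t * √N * (C4 * M * (N:ℝ) ^ (1/8:ℝ)) := by
          gcongr; exact h4 N M f hN hNM hf
      _ = 4 * C4 * M * (t * √N * (N:ℝ) ^ (1/8:ℝ)) := by ring
      _ = _ := by rw [key]; ring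
  linarith

lemma ee_prod {ι : Type*} (s : Finset ι) (g : ι → ℝ) : ∏ i ∈ s, ee (g i) = ee (∑ i ∈ s, g i) := by
  classical
  induction s using Finset.induction_on with
  | empty => simp [ee_zero]
  | insert a s ha ih => rw [prod_insert ha, sum_insert ha, ih, ee_add]

/-- The unnormalised multilinear sum over the sphere. -/
def TT (n N lam : ℕ) (F : Fin n → ℤ → ℂ) : ℂ :=
  ∑ x ∈ (Fintype.piFinset fun _ : Fin n => Icc (-(N:ℤ)) N) with ∑ i, (x i) ^ 2 = (lam : ℤ), ∏ i, F i (x i)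

lemma TT_circle (n N lam M : ℕ) (F : Fin n → ℤ → ℂ) (hlam : lam ≤ N ^ 2)
    (hM : M = n * N ^ 2 + 2 * N ^ 2 + 1) :
    (M:ℂ) * TT n N lam F = ∑ j ∈ range M, ee (-(lam * ((j:ℝ) / M))) * ∏ i, SS N (F i) ((j:ℝ) / M) := by
  have h1 : ∀ j : ℕ, ee (-(lam * ((j:ℝ) / M))) * ∏ i, SS N (F i) ((j:ℝ) / M) =
      ∑ x ∈ (Fintype.piFinset fun _ : Fin n => Icc (-(N:ℤ)) N),
        (∏ i, F i (x i)) * ee (((∑ i, (x i) ^ 2 - lam : ℤ):ℝ) * ((j:ℝ) / M)) := by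
    intro j
    simp only [SS]
    rw [prod_univ_sum, mul_sum]
    refine sum_congr rfl fun x _ => ?_
    rw [prod_mul_distrib, ee_prod, mul_left_comm, ← ee_add]
    congr 2
    rw [← sum_mul]; push_cast; ring
  simp_rw [h1]
  rw [sum_comm, TT, sum_filter, mul_sum]
  refine sum_congr rfl fun x hx => ?_
  rw [← mul_sum, ee_sum M (by omega)]
  have hx1 : ∀ i, -(N:ℤ) ≤ x i ∧ x i ≤ N := by
    intro i; exact mem_Icc.1 (Fintype.mem_piFinset.1 hx i)
  have hx2 : ∑ i, (x i) ^ 2 ≤ n * (N:ℤ) ^ 2 := by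
    calc ∑ i, (x i) ^ 2 ≤ ∑ i : Fin n, (N:ℤ) ^ 2 := sum_le_sum fun i _ => sq_le_sq' (hx1 i).1 (hx1 i).2
      _ = _ := by simp
  have hx3 : 0 ≤ ∑ i, (x i) ^ 2 := sum_nonneg fun i _ => sq_nonneg _
  by_cases h : ∑ i, (x i) ^ 2 = (lam : ℤ)
  · rw [if_pos h, if_pos (by rw [h]; simp)]; ring
  · rw [if_neg h, if_neg]
    · simp
    · intro hd
      apply h
      have hl : (lam:ℤ) ≤ (N:ℤ) ^ 2 := by exact_mod_cast hlam
      have hMz : (M:ℤ) = n * (N:ℤ) ^ 2 + 2 * (N:ℤ) ^ 2 + 1 := by exact_mod_cast hM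
      have hn : 0 ≤ (n:ℤ) * (N:ℤ) ^ 2 := by positivity
      have hn2 : 0 ≤ (N:ℤ) ^ 2 := by positivity
      have hl0 : (0:ℤ) ≤ lam := by positivity
      have := Int.eq_zero_of_abs_lt_dvd hd (by rw [abs_lt]; constructor <;> linarith)
      linarith

lemma TT_norm_one (n : ℕ) (hn : 5 ≤ n) : ∃ C : ℝ, 0 < C ∧ ∀ (N lam : ℕ) (F : Fin n → ℤ → ℂ), 1 ≤ N →
    lam ≤ N ^ 2 → (∀ i, ∑ x ∈ Icc (-(N:ℤ)) N, ‖F i x‖ ^ 2 ≤ 1) → ‖TT n N lam F‖ ≤ C * √N ^ (n - 4) := by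
  obtain ⟨C, hC, h5⟩ := L5
  have hnR : (0:ℝ) < n := by exact_mod_cast (by omega : 0 < n)
  refine ⟨n * 2 ^ (n - 5) * C, by positivity, fun N lam F hN hlam hF => ?_⟩
  obtain ⟨M, hM⟩ : ∃ M, M = n * N ^ 2 + 2 * N ^ 2 + 1 := ⟨_, rfl⟩
  have hM0 : (0:ℝ) < M := by exact_mod_cast (by omega : 0 < M)
  have hcirc := TT_circle n N lam M F hlam hM
  set S : Fin n → ℕ → ℝ := fun i j => ‖SS N (F i) ((j:ℝ) / M)‖ with hS
  have hS0 : ∀ i j, 0 ≤ S i j := fun i j => norm_nonneg _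
  have : Nonempty (Fin n) := ⟨⟨0, by omega⟩⟩
  have h1 : M * ‖TT n N lam F‖ ≤ ∑ j ∈ range M, ∏ i, S i j := by
    have : M * ‖TT n N lam F‖ = ‖(M:ℂ) * TT n N lam F‖ := by simp
    rw [this, hcirc]
    refine (norm_sum_le _ _).trans (le_of_eq (sum_congr rfl fun j _ => ?_))
    rw [norm_mul, ee_norm, one_mul, norm_prod]
  have h2 : ∀ j, ∏ i, S i j ≤ ∑ i, (2 * √N) ^ (n - 5) * S i j ^ 5 := by
    intro j
    obtain ⟨i0, -, hi0⟩ := exists_max_image (univ : Finset (Fin n)) (fun i => S i j) univ_nonempty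
    calc ∏ i, S i j ≤ ∏ i : Fin n, S i0 j := prod_le_prod (fun i _ => hS0 i j) fun i hi => hi0 i hi
      _ = S i0 j ^ n := by simp
      _ = S i0 j ^ (n - 5) * S i0 j ^ 5 := by rw [← pow_add]; congr 1; omega
      _ ≤ (2 * √N) ^ (n - 5) * S i0 j ^ 5 := by
          gcongr
          exact SS_le N hN _ (hF i0) _
      _ ≤ _ := single_le_sum (f := fun i => (2 * √(N:ℝ)) ^ (n - 5) * S i j ^ 5)
          (fun i _ => mul_nonneg (by positivity) (pow_nonneg (hS0 i j) _)) (mem_univ i0)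
  have h3 : M * ‖TT n N lam F‖ ≤ M * (n * 2 ^ (n - 5) * C * √N ^ (n - 4)) := by
    calc M * ‖TT n N lam F‖ ≤ ∑ j ∈ range M, ∑ i, (2 * √N) ^ (n - 5) * S i j ^ 5 := h1.trans (sum_le_sum fun j _ => h2 j)
      _ = ∑ i, (2 * √N) ^ (n - 5) * ∑ j ∈ range M, S i j ^ 5 := by
          rw [sum_comm]; simp_rw [mul_sum]
      _ ≤ ∑ i : Fin n, (2 * √N) ^ (n - 5) * (C * M * √N) := by
          refine sum_le_sum fun i _ => mul_le_mul_of_nonneg_left ?_ (by positivity)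
          exact h5 N M (F i) hN (by rw [hM]; nlinarith [Nat.zero_le (n * N ^ 2)]) (hF i)
      _ = _ := by
          rw [sum_const, card_univ, Fintype.card_fin, nsmul_eq_mul, mul_pow, show n - 4 = (n - 5) + 1 by omega, pow_succ]; ring
  exact le_of_mul_le_mul_left h3 hM0

lemma TT_bound (n : ℕ) (hn : 5 ≤ n) : ∃ C : ℝ, 0 < C ∧ ∀ (N lam : ℕ) (F : Fin n → ℤ → ℂ), 1 ≤ N →
    lam ≤ N ^ 2 → ‖TT n N lam F‖ ≤ C * √N ^ (n - 4) * ∏ i, √(∑ x ∈ Icc (-(N:ℤ)) N, ‖F i x‖ ^ 2) := by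
  obtain ⟨C, hC, h⟩ := TT_norm_one n hn
  refine ⟨C, hC, fun N lam F hN hlam => ?_⟩
  set q : Fin n → ℝ := fun i => ∑ x ∈ Icc (-(N:ℤ)) N, ‖F i x‖ ^ 2 with hq
  have hq0 : ∀ i, 0 ≤ q i := fun i => by simp only [hq]; positivity
  by_cases hz : ∃ i, q i = 0
  · obtain ⟨i, hi⟩ := hz
    have hFz : ∀ x ∈ Icc (-(N:ℤ)) N, F i x = 0 := by
      intro x hx
      have := (sum_eq_zero_iff_of_nonneg (fun x _ => by positivity)).1 hi x hx
      simpa using this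
    have : TT n N lam F = 0 := by
      unfold TT
      refine sum_eq_zero fun x hx => prod_eq_zero (mem_univ i) (hFz _ ?_)
      exact Fintype.mem_piFinset.1 (mem_filter.1 hx).1 i
    rw [this, norm_zero]
    positivity
  · push Not at hz
    have ha : ∀ i, 0 < √(q i) := fun i => Real.sqrt_pos.2 (lt_of_le_of_ne (hq0 i) (hz i).symm)
    have hG := h N lam (fun i x => F i x / (√(q i) : ℝ)) hN hlam (by
      intro i
      simp only [norm_div, Complex.norm_real, Real.norm_of_nonneg (ha i).le, div_pow]
      rw [← sum_div, Real.sq_sqrt (hq0 i)]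
      exact (div_self (hz i)).le)
    have hT : TT n N lam F = (∏ i, ((√(q i) : ℝ):ℂ)) * TT n N lam (fun i x => F i x / (√(q i) : ℝ)) := by
      unfold TT
      rw [mul_sum]
      refine sum_congr rfl fun x _ => ?_
      rw [← prod_mul_distrib]
      refine prod_congr rfl fun i _ => ?_
      have : ((√(q i) : ℝ):ℂ) ≠ 0 := by exact_mod_cast (ha i).ne'
      field_simp
    rw [hT, norm_mul, norm_prod, mul_comm]
    simp only [Complex.norm_real, Real.norm_of_nonneg (Real.sqrt_nonneg _)]
    gcongr

lemma final_pow (n : ℕ) (hn : 5 ≤ n) (N : ℕ) (hN : 1 ≤ N) (q : Fin n → ℝ) :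
    (N:ℝ) ^ (n - 2) * ∏ i, ((N:ℝ)⁻¹ * q i) ^ ((1:ℝ) / 2) = √N ^ (n - 4) * ∏ i, √(q i) := by
  have hNR : (1:ℝ) ≤ N := by exact_mod_cast hN
  have hs : 0 < √(N:ℝ) := by positivity
  have h1 : ∀ i, ((N:ℝ)⁻¹ * q i) ^ ((1:ℝ) / 2) = (√N)⁻¹ * √(q i) := by
    intro i
    rw [← Real.sqrt_eq_rpow, Real.sqrt_mul (by positivity), Real.sqrt_inv]
  simp_rw [h1]
  rw [prod_mul_distrib, prod_const, card_univ, Fintype.card_fin, ← mul_assoc]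
  congr 1
  have h2 : (N:ℝ) ^ (n - 2) = √N ^ (n - 4) * √N ^ n := by
    conv_lhs => rw [← Real.sq_sqrt (by positivity : (0:ℝ) ≤ N)]
    rw [← pow_mul, ← pow_add]; congr 1; omega
  rw [h2, inv_pow]
  field_simp

lemma round_facts (lam : ℕ) (hlam : 1 ≤ lam) :
    1 ≤ (round (2 * Real.sqrt lam)).toNat ∧ lam ≤ (round (2 * Real.sqrt lam)).toNat ^ 2 := by
  have h1 : (1:ℝ) ≤ √lam := Real.one_le_sqrt.2 (by exact_mod_cast hlam)
  have h2 := abs_le.1 (abs_sub_round (2 * √(lam:ℝ)))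
  set r := round (2 * √(lam:ℝ)) with hr
  have h3 : √(lam:ℝ) + 1 / 2 ≤ r := by linarith [h2.2]
  have h4 : (1:ℝ) < r + 1 := by linarith
  have h5 : 0 ≤ r := by
    have : (1:ℤ) < r + 1 := by exact_mod_cast h4
    omega
  obtain ⟨N, hN⟩ := Int.eq_ofNat_of_zero_le h5
  rw [hN] at h3 ⊢
  simp only [Int.toNat_natCast]
  push_cast at h3
  constructor
  · have : (1:ℝ) ≤ N := by linarith
    exact_mod_cast this
  · have : (lam:ℝ) ≤ (N:ℝ) ^ 2 := by
      calc (lam:ℝ) = √lam ^ 2 := (Real.sq_sqrt (by positivity)).symm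
        _ ≤ _ := by gcongr; linarith
    exact_mod_cast this

/-- for `n ≥ 5` there is a constant `C = C(n)` such that for every
`lam ≥ 1`, all `f₁,…,f_n` and all `y`,
`|A_lam[f₁,…,f_n](y)| ≤ C (N_lam^{n-2}/r_n(lam)) ∏_i (N_lam⁻¹ ∑_{|x| ≤ N_lam} |f_i(y-x)|²)^{1/2}`,
where `N_lam` is the nearest integer to `2 lam^{1/2}`. -/
theorem statement13 (n : ℕ) (hn : 5 ≤ n) :
    ∃ C : ℝ, 0 < C ∧ ∀ lam : ℕ, 1 ≤ lam → ∀ f : Fin n → ℤ → ℂ, ∀ y : ℤ,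
      ‖mulAvg n lam f y‖ ≤
        C * ((((round (2 * Real.sqrt lam)).toNat : ℝ)) ^ (n - 2) / (sphereCount n lam : ℝ)) *
          ∏ i, ((((round (2 * Real.sqrt lam)).toNat : ℝ))⁻¹ *
              ∑ x ∈ Finset.Icc (-((round (2 * Real.sqrt lam)).toNat : ℤ))
                  ((round (2 * Real.sqrt lam)).toNat : ℤ), ‖f i (y - x)‖ ^ 2) ^ ((1 : ℝ) / 2) := by
  obtain ⟨C, hC, h⟩ := TT_bound n hn
  refine ⟨C, hC, fun lam hlam f y => ?_⟩
  obtain ⟨hN1, hN2⟩ := round_facts lam hlam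
  generalize (round (2 * Real.sqrt lam)).toNat = N at *
  have hset : {x : Fin n → ℤ | ∑ i, (x i) ^ 2 = (lam : ℤ)} =
      ((Fintype.piFinset fun _ : Fin n => Icc (-(N:ℤ)) N).filter
        fun x => ∑ i, (x i) ^ 2 = (lam : ℤ) : Finset (Fin n → ℤ)) := by
    ext x
    simp only [Set.mem_setOf_eq, coe_filter, Fintype.mem_piFinset, mem_Icc]
    refine ⟨fun hx => ⟨fun i => ?_, hx⟩, fun hx => hx.2⟩
    have h1 : (x i) ^ 2 ≤ (N:ℤ) ^ 2 := by
      calc (x i) ^ 2 ≤ ∑ i, (x i) ^ 2 := single_le_sum (f := fun i => (x i) ^ 2) (fun i _ => sq_nonneg _) (mem_univ i)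
        _ = lam := hx
        _ ≤ _ := by exact_mod_cast hN2
    exact abs_le_of_sq_le_sq' h1 (by positivity)
  have hT : ∑ᶠ x ∈ {x : Fin n → ℤ | ∑ i, (x i) ^ 2 = (lam : ℤ)}, ∏ i, f i (y - x i) =
      TT n N lam (fun i x => f i (y - x)) := by
    rw [hset, finsum_mem_coe_finset]
    rfl
  have hb := h N lam (fun i x => f i (y - x)) hN1 hN2
  have hp := final_pow n hn N hN1 (fun i => ∑ x ∈ Icc (-(N:ℤ)) N, ‖f i (y - x)‖ ^ 2)
  unfold mulAvg
  rw [hT, norm_mul, norm_inv, Complex.norm_natCast]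
  calc (sphereCount n lam : ℝ)⁻¹ * ‖TT n N lam (fun i x => f i (y - x))‖
      ≤ (sphereCount n lam : ℝ)⁻¹ * (C * √N ^ (n - 4) *
        ∏ i, √(∑ x ∈ Icc (-(N:ℤ)) N, ‖f i (y - x)‖ ^ 2)) := by gcongr
    _ = (sphereCount n lam : ℝ)⁻¹ * C * (√N ^ (n - 4) *
        ∏ i, √(∑ x ∈ Icc (-(N:ℤ)) N, ‖f i (y - x)‖ ^ 2)) := by ring
    _ = _ := by rw [← hp]; ring
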